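/- Let N ≥ 3, let V satisfy condition (V) and the decay condition that there exist A, α > 0 with V⁺(x) ≤ A|x|^{-2-α} for all x ∈ ℝ^N, and let f satisfy conditions (f1), (f2), (f3). Then for every λ > Λ, problem (P_λ) has at least one solution. -/

import Mathlib

open MeasureTheory Filter Metric Set
open scoped ENNReal NNReal Topology

noncomputable section

/-- Euclidean space `ℝ^N`. -/
abbrev Euc (N : ℕ) := EuclideanSpace ℝ (Fin N)

/-- The Laplace operator on `ℝ^N`: the sum of the second partial derivatives. -/
def lap (N : ℕ) (u : Euc N → ℝ) (x : Euc N) : ℝ :=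
  ∑ i : Fin N,
    fderiv ℝ (fun y => fderiv ℝ u y (EuclideanSpace.single i 1)) x (EuclideanSpace.single i 1)

/-- The principal eigenvalue `λ₁(R)`: the infimum of `∫_{B_R} |∇u|²` over smooth functions
compactly supported in the open ball `B_R` with `∫_{B_R} V u² = 1`. -/
def lam1 (N : ℕ) (V : Euc N → ℝ) (R : ℝ) : ℝ :=
  sInf { t : ℝ | ∃ u : Euc N → ℝ, ContDiff ℝ (⊤ : ℕ∞) u ∧ HasCompactSupport u ∧
    tsupport u ⊆ ball (0 : Euc N) R ∧
    (∫ x, V x * u x ^ 2) = 1 ∧ t = ∫ x, ‖gradient u x‖ ^ 2 }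

/-- `Λ := lim_{R → ∞} λ₁(R)`. -/
def Lam (N : ℕ) (V : Euc N → ℝ) : ℝ := limUnder atTop (lam1 N V)

/-- Condition (V): `V` is a bounded Hölder-continuous function whose positive part
`V⁺ = max(V, 0)` is nontrivial and decomposes as `V₁ + V₂` with `V₁ ∈ L^{N/2}` and
`|x|² V₂(x) → 0` as `|x| → ∞`. -/
def CondV (N : ℕ) (V V₁ V₂ : Euc N → ℝ) : Prop :=
  (∃ C β : ℝ≥0, 0 < β ∧ β ≤ 1 ∧ HolderWith C β V) ∧
  (∃ C : ℝ, ∀ x, |V x| ≤ C) ∧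
  (∃ x, 0 < V x) ∧
  (∀ x, max (V x) 0 = V₁ x + V₂ x) ∧
  MemLp V₁ ((N : ℝ≥0∞) / 2) volume ∧
  Tendsto (fun x : Euc N => ‖x‖ ^ 2 * V₂ x) (cocompact _) (𝓝 0)

/-- The decay condition: `V⁺(x) ≤ A |x|^{-2-α}`. -/
def CondVDecay (N : ℕ) (V : Euc N → ℝ) : Prop :=
  ∃ A α : ℝ, 0 < A ∧ 0 < α ∧
    ∀ x : Euc N, x ≠ 0 → max (V x) 0 ≤ A * ‖x‖ ^ (-2 - α)

/-- Conditions (f1), (f2), (f3) on the absorption term `f`. -/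
def CondF (N : ℕ) (V : Euc N → ℝ) (f : ℝ → ℝ) : Prop :=
  ContDiff ℝ 1 f ∧ (∀ u : ℝ, 0 ≤ u → 0 ≤ f u) ∧
  -- (f1)
  f 0 = 0 ∧ deriv f 0 = 0 ∧
  0 < Filter.liminf (fun u : ℝ => ((deriv f u / u : ℝ) : EReal)) (𝓝[>] (0 : ℝ)) ∧
  -- (f2)
  StrictMonoOn (fun u : ℝ => f u / u) (Ioi 0) ∧
  -- (f3)
  (∃ L : EReal, Tendsto (fun u : ℝ => ((f u / u : ℝ) : EReal)) atTop (𝓝 L) ∧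
    ((⨆ x, |V x| : ℝ) : EReal) < L)

/-- A solution of problem `(P_λ)`: a positive `C²` function solving the logistic equation
and decaying to zero at infinity. -/
structure IsSolution (N : ℕ) (V : Euc N → ℝ) (f : ℝ → ℝ) (lam : ℝ) (u : Euc N → ℝ) : Prop where
  smooth : ContDiff ℝ 2 u
  pos : ∀ x, 0 < u x
  eqn : ∀ x, -lap N u x = lam * (V x * u x - f (u x))
  decay : Tendsto u (cocompact (Euc N)) (𝓝 0)

/-- The surface integral `∫_{∂B_R} g dσ` over the sphere of radius `R`, written in polar
coordinates with respect to the canonical surface measure on the unit sphere. -/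
def sphereInt (N : ℕ) (g : Euc N → ℝ) (R : ℝ) : ℝ :=
  ∫ ω : sphere (0 : Euc N) 1, g (R • (ω : Euc N)) * R ^ (N - 1)
    ∂((volume : Measure (Euc N)).toSphere)

/-!
The resolvent `(k - Δ)⁻¹ g` is the Laplace transform of the heat semigroup. After the substitution
`t = s²` it is an integral over `s` of Gaussian means `∫ g (x + s z) γ(z) dz`, and every derivative
in `x` falls on the kernel at the price of a factor `s⁻¹`. Since `∫ D²γ = 0`, the Hölder continuity
of `g` compensates the resulting singularity at `s = 0`, so the resolvent is `C²`; integrating the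
heat equation in `s` gives `Δ (k - Δ)⁻¹ g = k (k - Δ)⁻¹ g - g`.

By (f3) some constant `M` is a supersolution. The decay of `V⁺` provides a second one,
`W = K (1 + |x|²)^p` with a small negative `p`, which is superharmonic because `N ≥ 3` and tends to
`0` at infinity. For large `k` the map `u ↦ (k - Δ)⁻¹ (k u + λ (V u - f u))` is order preserving, so
its iterates starting from `min M W` decrease to a fixed point `u`, a nonnegative solution that
tends to `0` at infinity.

If `u` were `0`, the quotients `f(uₙ) / uₙ` would tend to `0`, and Picone's inequality for the
positive iterates would give `λ ∫ V φ² ≤ ∫ |∇φ|²` for all test functions `φ`, contradicting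
`λ > Λ`. Hence `u` is positive somewhere, and the positivity of the heat kernel makes it positive
everywhere.
-/

section SchwartzKernels

open SchwartzMap
open scoped Nat

theorem one_add_pow_mul_exp_neg_mul_sq_le {b : ℝ} (hb : 0 < b) (m : ℕ) {r : ℝ} (hr : 0 ≤ r) :
    (1 + r) ^ m * Real.exp (-b * r ^ 2) ≤ m ! * Real.exp (1 + (4 * b)⁻¹) := by
  have hexp : (1 + r) ^ m ≤ m ! * Real.exp (1 + r) := by
    have := Real.pow_div_factorial_le_exp (1 + r) (by positivity) m
    rwa [div_le_iff₀' (by positivity)] at this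
  have hsq : 1 + r + -b * r ^ 2 ≤ 1 + (4 * b)⁻¹ := by
    have : (4 * b)⁻¹ - r + b * r ^ 2 = b * (r - (2 * b)⁻¹) ^ 2 := by field_simp; ring
    nlinarith [sq_nonneg (r - (2 * b)⁻¹)]
  calc (1 + r) ^ m * Real.exp (-b * r ^ 2)
      ≤ m ! * Real.exp (1 + r) * Real.exp (-b * r ^ 2) := by gcongr
    _ = m ! * Real.exp (1 + r + -b * r ^ 2) := by rw [mul_assoc, ← Real.exp_add]
    _ ≤ m ! * Real.exp (1 + (4 * b)⁻¹) := by gcongr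

theorem norm_iteratedFDeriv_exp_comp_le {E : Type*} [NormedAddCommGroup E] [NormedSpace ℝ E]
    {f : E → ℝ} (hf : f.HasTemperateGrowth) (n : ℕ) :
    ∃ (l : ℕ) (C : ℝ), ∀ x,
      ‖iteratedFDeriv ℝ n (Real.exp ∘ f) x‖ ≤ C * (1 + ‖x‖) ^ l * Real.exp (f x) := by
  obtain ⟨l, C, -, hC⟩ := hf.norm_iteratedFDeriv_le_uniform n
  refine ⟨l * n, n ! * max 1 C ^ n, fun x ↦ ?_⟩
  have hone : 1 ≤ max 1 C * (1 + ‖x‖) ^ l :=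
    one_le_mul_of_one_le_of_one_le (le_max_left ..)
      (one_le_pow₀ (le_add_of_nonneg_right (norm_nonneg x)))
  have hexp : ∀ i ≤ n, ‖iteratedFDeriv ℝ i Real.exp (f x)‖ ≤ Real.exp (f x) := fun i _ ↦ by
    rw [norm_iteratedFDeriv_eq_norm_iteratedDeriv, iteratedDeriv_eq_iterate, Real.iter_deriv_exp,
      Real.norm_of_nonneg (Real.exp_pos _).le]
  have hder : ∀ i, 1 ≤ i → i ≤ n → ‖iteratedFDeriv ℝ i f x‖ ≤ (max 1 C * (1 + ‖x‖) ^ l) ^ i :=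
    fun i hi hin ↦ calc
      ‖iteratedFDeriv ℝ i f x‖ ≤ C * (1 + ‖x‖) ^ l := hC i hin x
      _ ≤ max 1 C * (1 + ‖x‖) ^ l := by gcongr; exact le_max_right ..
      _ ≤ _ := le_self_pow₀ hone (by lia)
  refine (norm_iteratedFDeriv_comp_le Real.contDiff_exp (hf.1.of_le (mod_cast le_top)) le_rfl x
    hexp hder).trans_eq ?_
  rw [mul_pow, ← pow_mul]
  ring

/-- The Gaussian `z ↦ exp (-b ‖z‖²)` as a Schwartz function. -/
def gaussianSchwartz (E : Type*) [NormedAddCommGroup E] [InnerProductSpace ℝ E] {b : ℝ}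
    (hb : 0 < b) : 𝓢(E, ℝ) where
  toFun z := Real.exp (-b * ‖z‖ ^ 2)
  smooth' := (contDiff_const.mul (contDiff_norm_sq ℝ)).exp
  decay' m n := by
    have hgrowth : (fun z : E ↦ -b * ‖z‖ ^ 2).HasTemperateGrowth := by fun_prop
    obtain ⟨l, C, hC⟩ := norm_iteratedFDeriv_exp_comp_le hgrowth n
    refine ⟨|C| * ((m + l)! * Real.exp (1 + (4 * b)⁻¹)), fun z ↦ ?_⟩
    calc ‖z‖ ^ m * ‖iteratedFDeriv ℝ n (Real.exp ∘ fun z : E ↦ -b * ‖z‖ ^ 2) z‖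
        ≤ (1 + ‖z‖) ^ m * (|C| * (1 + ‖z‖) ^ l * Real.exp (-b * ‖z‖ ^ 2)) := by
          gcongr
          · linarith
          · exact (hC z).trans (by gcongr; exact le_abs_self C)
      _ = |C| * ((1 + ‖z‖) ^ (m + l) * Real.exp (-b * ‖z‖ ^ 2)) := by ring
      _ ≤ _ := mul_le_mul_of_nonneg_left
          (one_add_pow_mul_exp_neg_mul_sq_le hb _ (norm_nonneg z)) (abs_nonneg C)

end SchwartzKernels

section DilationMean

open SchwartzMap Module

theorem hasDerivAt_pow_inv_smul_comp_inv_smul {E F : Type*} [NormedAddCommGroup E]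
    [NormedSpace ℝ E] [NormedAddCommGroup F] [NormedSpace ℝ F] {n : ℕ} {ψ χ : E → F}
    (hψ : Differentiable ℝ ψ) (hχ : ∀ z, χ z = -((n : ℝ) • ψ z + fderiv ℝ ψ z z)) {s : ℝ}
    (hs : 0 < s) (v : E) :
    HasDerivAt (fun t ↦ (t ^ n)⁻¹ • ψ (t⁻¹ • v)) (s⁻¹ • (s ^ n)⁻¹ • χ (s⁻¹ • v)) s := by
  have hscale : HasDerivAt (fun t : ℝ ↦ t⁻¹ • v) (-(s ^ 2)⁻¹ • v) s :=
    (hasDerivAt_inv hs.ne').smul_const v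
  have hpow : HasDerivAt (fun t : ℝ ↦ (t ^ n)⁻¹) (-(n * s⁻¹ * (s ^ n)⁻¹)) s := by
    refine ((hasDerivAt_pow n s).fun_inv (by positivity)).congr_deriv ?_
    rcases n with _ | n
    · simp
    · rw [Nat.add_sub_cancel, pow_succ]; field_simp; ring
  refine (hpow.smul ((hψ _).hasFDerivAt.comp_hasDerivAt s hscale)).congr_deriv ?_
  rw [hχ, Function.comp_apply, map_smul, map_smul]
  module

variable {E F : Type*} [NormedAddCommGroup E] [InnerProductSpace ℝ E] [FiniteDimensional ℝ E]
  [MeasurableSpace E] [BorelSpace E] [NormedAddCommGroup F] [NormedSpace ℝ F]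
  {g : E → ℝ} {B s : ℝ}

/-- The mean of `g` around `x` at scale `s` against the kernel `ψ`. For a Gaussian kernel this is
the heat semigroup at time `s²` applied to `g`. -/
def dilationMean (ψ : E → F) (g : E → ℝ) (s : ℝ) (x : E) : F :=
  ∫ z, g (x + s • z) • ψ z

theorem integrable_smul_comp_dilation {ψ : E → F} (hψ : Integrable ψ) (hg : Measurable g)
    (hB : ∀ x, ‖g x‖ ≤ B) (s : ℝ) (x : E) : Integrable fun z ↦ g (x + s • z) • ψ z :=
  hψ.bdd_smul B (hg.comp (by fun_prop)).aestronglyMeasurable (ae_of_all _ fun _ ↦ hB _)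

theorem norm_dilationMean_le {ψ : E → F} (hψ : Integrable ψ) (hB : ∀ x, ‖g x‖ ≤ B) (s : ℝ)
    (x : E) : ‖dilationMean ψ g s x‖ ≤ B * ∫ z, ‖ψ z‖ := by
  rw [dilationMean, ← integral_const_mul]
  refine norm_integral_le_of_norm_le (hψ.norm.const_mul B) (ae_of_all _ fun z ↦ ?_)
  rw [norm_smul]
  gcongr
  exact hB _

theorem norm_dilationMean_le_of_holderWith {C β : ℝ≥0} {ψ : E → F}
    (hψ : Integrable ψ) (hψβ : Integrable fun z ↦ ‖z‖ ^ (β : ℝ) * ‖ψ z‖) (hψ0 : ∫ z, ψ z = 0)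
    (hg : Measurable g) (hB : ∀ x, ‖g x‖ ≤ B) (hC : HolderWith C β g) (hs : 0 ≤ s) (x : E) :
    ‖dilationMean ψ g s x‖ ≤ (C * ∫ z, ‖z‖ ^ (β : ℝ) * ‖ψ z‖) * s ^ (β : ℝ) := by
  have hcancel : dilationMean ψ g s x = ∫ z, (g (x + s • z) - g x) • ψ z := by
    simp only [sub_smul]
    rw [integral_sub (integrable_smul_comp_dilation hψ hg hB s x) (hψ.fun_smul (g x)),
      integral_smul, hψ0, smul_zero, sub_zero, dilationMean]
  rw [hcancel, mul_right_comm, ← integral_const_mul]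
  refine norm_integral_le_of_norm_le (hψβ.const_mul _) (ae_of_all _ fun z ↦ ?_)
  rw [norm_smul, ← mul_assoc]
  gcongr
  calc ‖g (x + s • z) - g x‖ ≤ C * dist (x + s • z) x ^ (β : ℝ) := by
        rw [← dist_eq_norm]; exact hC.dist_le _ _
    _ = C * s ^ (β : ℝ) * ‖z‖ ^ (β : ℝ) := by
        rw [dist_eq_norm, add_sub_cancel_left, norm_smul, Real.norm_of_nonneg hs,
          Real.mul_rpow hs (norm_nonneg z), mul_assoc]

theorem stronglyMeasurable_dilationMean {ψ : E → F} (hψ : Continuous ψ) (hg : Measurable g)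
    (x : E) : StronglyMeasurable fun s ↦ dilationMean ψ g s x := by
  have hcomp : Measurable fun p : ℝ × E ↦ g (x + p.1 • p.2) := hg.comp (by fun_prop)
  exact StronglyMeasurable.integral_prod_right (f := fun s z ↦ g (x + s • z) • ψ z)
    (hcomp.stronglyMeasurable.smul (hψ.comp continuous_snd).stronglyMeasurable)

theorem continuous_dilationMean {ψ : E → F} (hψ : Integrable ψ)
    (hg : Continuous g) (hB : ∀ x, ‖g x‖ ≤ B) :
    Continuous fun p : ℝ × E ↦ dilationMean ψ g p.1 p.2 := by
  refine continuous_of_dominated (bound := fun z ↦ B * ‖ψ z‖)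
    (fun p ↦ (integrable_smul_comp_dilation hψ hg.measurable hB _ _).aestronglyMeasurable)
    (fun p ↦ ae_of_all _ fun z ↦ ?_) (hψ.norm.const_mul B) (ae_of_all _ fun z ↦ by fun_prop)
  rw [norm_smul]
  gcongr
  exact hB _

theorem dilationMean_const (ψ : E → F) (c s : ℝ) (x : E) :
    dilationMean ψ (fun _ ↦ c) s x = c • ∫ z, ψ z :=
  integral_smul c ψ

theorem dilationMean_zero (ψ : E → F) (g : E → ℝ) (x : E) :
    dilationMean ψ g 0 x = g x • ∫ z, ψ z := by
  simp only [dilationMean, zero_smul, add_zero, integral_smul]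

theorem dilationMean_eq_integral_comp_sub (ψ : E → F) (g : E → ℝ) (hs : 0 < s) (x : E) :
    dilationMean ψ g s x = ∫ y, g y • (s ^ finrank ℝ E)⁻¹ • ψ (s⁻¹ • (y - x)) := by
  have hscale := Measure.integral_comp_smul (volume : Measure E)
    (fun y ↦ g (x + y) • ψ (s⁻¹ • y)) s
  simp only [inv_smul_smul₀ hs.ne', abs_of_pos (inv_pos.2 (pow_pos hs _))] at hscale
  rw [dilationMean, hscale, ← integral_smul,
    ← integral_add_left_eq_self (fun y ↦ g y • (s ^ finrank ℝ E)⁻¹ • ψ (s⁻¹ • (y - x))) x]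
  simp only [add_sub_cancel_left, smul_comm (g _)]

theorem exists_integrable_bound_dilation (ψ : 𝓢(E, F)) (hs : 0 < s) (x : E) :
    ∃ b : E → ℝ, Integrable b ∧ ∀ᶠ p in 𝓝 (s, x), ∀ y, ‖ψ (p.1⁻¹ • (y - p.2))‖ ≤ b y := by
  set n := finrank ℝ E + 1
  obtain ⟨C, hC⟩ : ∃ C, ∀ z, (1 + ‖z‖) ^ n * ‖ψ z‖ ≤ C := ⟨_, fun z ↦ by
    simpa using one_add_le_sup_seminorm_apply (𝕜 := ℝ) (m := (n, 0)) le_rfl le_rfl ψ z⟩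
  set c := 2 + ‖x‖ + 2 * s
  have hint : Integrable fun y : E ↦ (1 + ‖y‖) ^ (-(n : ℝ)) :=
    integrable_one_add_norm (by simp [n])
  refine ⟨fun y ↦ c ^ n * C * (1 + ‖y‖) ^ (-(n : ℝ)), hint.const_mul _, ?_⟩
  have hnear : Ioo 0 (2 * s) ×ˢ ball x 1 ∈ 𝓝 (s, x) :=
    prod_mem_nhds (Ioo_mem_nhds hs (by linarith)) (ball_mem_nhds x one_pos)
  filter_upwards [hnear] with ⟨t, x'⟩ ⟨⟨(ht : 0 < t), (hts : t < 2 * s)⟩, hx'⟩ y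
  rw [mem_ball, dist_eq_norm] at hx'
  have hy : 1 + ‖y‖ ≤ c * (1 + ‖t⁻¹ • (y - x')‖) := by
    have hdec : y = x' + t • t⁻¹ • (y - x') := by rw [smul_inv_smul₀ ht.ne', add_sub_cancel]
    have := (congrArg norm hdec).trans_le (norm_add_le _ _)
    rw [norm_smul, Real.norm_of_nonneg ht.le] at this
    nlinarith [norm_nonneg (t⁻¹ • (y - x')), norm_nonneg x, norm_le_norm_add_norm_sub' x' x]
  rw [Real.rpow_neg (by positivity), Real.rpow_natCast, ← div_eq_mul_inv,
    le_div_iff₀ (by positivity)]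
  calc ‖ψ (t⁻¹ • (y - x'))‖ * (1 + ‖y‖) ^ n
      ≤ ‖ψ (t⁻¹ • (y - x'))‖ * (c * (1 + ‖t⁻¹ • (y - x')‖)) ^ n := by gcongr
    _ = c ^ n * ((1 + ‖t⁻¹ • (y - x')‖) ^ n * ‖ψ (t⁻¹ • (y - x'))‖) := by rw [mul_pow]; ring
    _ ≤ c ^ n * C := by gcongr; exact hC _

theorem integrable_smul_comp_inv_dilation (ψ : 𝓢(E, F)) (hg : Measurable g)
    (hB : ∀ x, ‖g x‖ ≤ B) (hs : 0 < s) (x : E) :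
    Integrable fun y ↦ g y • (s ^ finrank ℝ E)⁻¹ • ψ (s⁻¹ • (y - x)) :=
  (((ψ.integrable.comp_smul (inv_ne_zero hs.ne')).comp_sub_right x).smul _).bdd_smul B
    hg.aestronglyMeasurable (ae_of_all _ hB)

theorem hasFDerivAt_dilationMean (ψ : 𝓢(E, F)) (hg : Measurable g) (hB : ∀ x, ‖g x‖ ≤ B)
    (hs : 0 < s) (x : E) :
    HasFDerivAt (dilationMean ψ g s) (-(s⁻¹ • dilationMean (fderivCLM ℝ E F ψ) g s x)) x := by
  have hB0 : 0 ≤ B := (norm_nonneg _).trans (hB 0)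
  set c := (s ^ finrank ℝ E)⁻¹
  set ψ' := fderivCLM ℝ E F ψ
  obtain ⟨b, hb, hbound⟩ := exists_integrable_bound_dilation ψ' hs x
  have hbound : {x' | ∀ y, ‖ψ' (s⁻¹ • (y - x'))‖ ≤ b y} ∈ 𝓝 x :=
    (Continuous.prodMk_right s).continuousAt.eventually hbound
  have hlim : -(s⁻¹ • dilationMean ψ' g s x)
      = ∫ y, g y • c • -(s⁻¹ • ψ' (s⁻¹ • (y - x))) := by
    rw [dilationMean_eq_integral_comp_sub ψ' g hs x, ← integral_smul, ← integral_neg]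
    simp only [smul_neg, smul_comm s⁻¹]
    rfl
  rw [hlim, show dilationMean ψ g s = _ from
    funext fun x ↦ dilationMean_eq_integral_comp_sub ψ g hs x]
  refine hasFDerivAt_integral_of_dominated_of_fderiv_le
    (F' := fun x' y ↦ g y • c • -(s⁻¹ • ψ' (s⁻¹ • (y - x'))))
    (bound := fun y ↦ B * (|c| * (|s⁻¹| * b y)))
    hbound (Eventually.of_forall fun x' ↦
      (integrable_smul_comp_inv_dilation ψ hg hB hs x').aestronglyMeasurable)
    (integrable_smul_comp_inv_dilation ψ hg hB hs x)
    (hg.aestronglyMeasurable.smul (Continuous.aestronglyMeasurable (by fun_prop)))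
    (ae_of_all _ fun y x' hx' ↦ ?_) (((hb.const_mul _).const_mul _).const_mul _)
    (ae_of_all _ fun y x' _ ↦ ?_)
  · rw [norm_smul, norm_smul, norm_neg, norm_smul, Real.norm_eq_abs c, Real.norm_eq_abs s⁻¹]
    gcongr
    exacts [hB y, hx' y]
  · have hinner : HasFDerivAt (fun x' : E ↦ s⁻¹ • (y - x'))
        (s⁻¹ • -ContinuousLinearMap.id ℝ E) x' :=
      ((hasFDerivAt_id x').const_sub y).const_smul s⁻¹
    refine (((ψ.hasFDerivAt _).comp x' hinner).const_smul c).const_smul (g y) |>.congr_fderiv ?_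
    ext v
    simp [ψ']

theorem hasDerivAt_dilationMean {ψ χ : 𝓢(E, F)}
    (hχ : ∀ z, χ z = -((finrank ℝ E : ℝ) • ψ z + fderiv ℝ ψ z z))
    (hg : Measurable g) (hB : ∀ x, ‖g x‖ ≤ B) (hs : 0 < s) (x : E) :
    HasDerivAt (fun t ↦ dilationMean ψ g t x) (s⁻¹ • dilationMean χ g s x) s := by
  have hB0 : 0 ≤ B := (norm_nonneg _).trans (hB 0)
  set d := finrank ℝ E
  obtain ⟨b, hb, hbound⟩ := exists_integrable_bound_dilation χ hs x
  have hpos : ∀ᶠ t in 𝓝 s, 0 < t := lt_mem_nhds hs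
  have hsmall : ∀ᶠ t in 𝓝 s, t⁻¹ * (t ^ d)⁻¹ < s⁻¹ * (s ^ d)⁻¹ + 1 :=
    ((continuousAt_inv₀ hs.ne').mul ((continuousAt_id.pow d).inv₀
      (pow_ne_zero _ hs.ne'))).eventually_lt_const (lt_add_one _)
  have hbound : {t | (∀ y, ‖χ (t⁻¹ • (y - x))‖ ≤ b y) ∧ 0 < t ∧
      t⁻¹ * (t ^ d)⁻¹ < s⁻¹ * (s ^ d)⁻¹ + 1} ∈ 𝓝 s :=
    ((Continuous.prodMk_left x).continuousAt.eventually hbound).and (hpos.and hsmall)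
  have hlim : s⁻¹ • dilationMean χ g s x
      = ∫ y, g y • s⁻¹ • (s ^ d)⁻¹ • χ (s⁻¹ • (y - x)) := by
    rw [dilationMean_eq_integral_comp_sub χ g hs x, ← integral_smul]
    simp only [smul_comm s⁻¹]
    rfl
  rw [hlim]
  refine HasDerivAt.congr_of_eventuallyEq ?_
    (hpos.mono fun t ht ↦ dilationMean_eq_integral_comp_sub ψ g ht x)
  refine (hasDerivAt_integral_of_dominated_loc_of_deriv_le
    (F' := fun t y ↦ g y • t⁻¹ • (t ^ d)⁻¹ • χ (t⁻¹ • (y - x)))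
    (bound := fun y ↦ B * ((s⁻¹ * (s ^ d)⁻¹ + 1) * b y)) hbound
    (Eventually.of_forall fun t ↦ hg.aestronglyMeasurable.smul
      (Continuous.aestronglyMeasurable (by fun_prop)))
    (integrable_smul_comp_inv_dilation ψ hg hB hs x)
    (hg.aestronglyMeasurable.smul (Continuous.aestronglyMeasurable (by fun_prop)))
    (ae_of_all _ fun y t ⟨ht, ht0, hts⟩ ↦ ?_) ((hb.const_mul _).const_mul _)
    (ae_of_all _ fun y t ⟨_, ht0, _⟩ ↦
      (hasDerivAt_pow_inv_smul_comp_inv_smul ψ.differentiable hχ ht0 _).const_smul _)).2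
  rw [norm_smul, smul_smul, norm_smul, Real.norm_of_nonneg (by positivity : 0 ≤ t⁻¹ * (t ^ d)⁻¹)]
  gcongr
  exacts [hB y, ht y]

theorem integral_fderivCLM_eq_zero (ψ : 𝓢(E, F)) :
    ∫ z, fderivCLM ℝ E F ψ z = 0 := by
  have hderiv := hasFDerivAt_dilationMean ψ (g := fun _ ↦ 1) measurable_const (B := 1) (by simp)
    one_pos 0
  rw [show dilationMean ψ (fun _ ↦ 1) 1 = _ from funext (dilationMean_const ψ 1 1)] at hderiv
  simpa [dilationMean_const] using hderiv.unique (hasFDerivAt_const _ _)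

end DilationMean

section Laplacian

open InnerProductSpace Laplacian Module SchwartzMap

variable {E : Type*} [NormedAddCommGroup E] [InnerProductSpace ℝ E]

theorem hasFDerivAt_norm_sq (x : E) :
    HasFDerivAt (fun y : E ↦ ‖y‖ ^ 2) ((2 : ℝ) • innerSL ℝ x) x :=
  (hasStrictFDerivAt_norm_sq x).hasFDerivAt.congr_fderiv (by simp only [two_smul])

variable [FiniteDimensional ℝ E]

variable (E) in
/-- The trace of a bilinear form on a Euclidean space, as a continuous linear map. It turns the
second derivative into the Laplacian. -/
def bilinTrace : (E →L[ℝ] E →L[ℝ] ℝ) →L[ℝ] ℝ :=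
  ∑ i, ContinuousLinearMap.apply ℝ ℝ (stdOrthonormalBasis ℝ E i) ∘L
    ContinuousLinearMap.apply ℝ (E →L[ℝ] ℝ) (stdOrthonormalBasis ℝ E i)

theorem bilinTrace_apply (A : E →L[ℝ] E →L[ℝ] ℝ) :
    bilinTrace E A = ∑ i, A (stdOrthonormalBasis ℝ E i) (stdOrthonormalBasis ℝ E i) := by
  simp [bilinTrace]

theorem laplacian_eq_bilinTrace {u : E → ℝ} {u' : E → E →L[ℝ] ℝ} {A : E →L[ℝ] E →L[ℝ] ℝ} {x : E}
    (hu : ∀ y, HasFDerivAt u (u' y) y) (hu' : HasFDerivAt u' A x) : Δ u x = bilinTrace E A := by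
  rw [laplacian_eq_iteratedFDeriv_stdOrthonormalBasis, bilinTrace_apply]
  simp only [iteratedFDeriv_two_apply, Matrix.cons_val_zero, Matrix.cons_val_one]
  rw [show fderiv ℝ u = u' from funext fun y ↦ (hu y).fderiv, hu'.fderiv]

theorem laplacian_comp_norm_sq {φ φ' : ℝ → ℝ} {φ'' : ℝ} {x : E}
    (hφ : ∀ t, 0 ≤ t → HasDerivAt φ (φ' t) t) (hφ' : HasDerivAt φ' φ'' (‖x‖ ^ 2)) :
    Δ (fun y : E ↦ φ (‖y‖ ^ 2)) x
      = 4 * ‖x‖ ^ 2 * φ'' + 2 * finrank ℝ E * φ' (‖x‖ ^ 2) := by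
  have hfst (y : E) :
      HasFDerivAt (fun y : E ↦ φ (‖y‖ ^ 2)) (φ' (‖y‖ ^ 2) • (2 : ℝ) • innerSL ℝ y) y :=
    (hφ _ (sq_nonneg _)).comp_hasFDerivAt y (hasFDerivAt_norm_sq y)
  let I : E →L[ℝ] E →L[ℝ] ℝ := innerSL ℝ
  have hsnd : HasFDerivAt (fun y : E ↦ φ' (‖y‖ ^ 2) • (2 : ℝ) • I y)
      (φ' (‖x‖ ^ 2) • (2 : ℝ) • I + (φ'' • (2 : ℝ) • I x).smulRight ((2 : ℝ) • I x)) x :=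
    (hφ'.comp_hasFDerivAt x (hasFDerivAt_norm_sq x)).smul (I.hasFDerivAt.const_smul (2 : ℝ))
  rw [laplacian_eq_bilinTrace hfst hsnd, bilinTrace_apply]
  have hterm (e : E) (he : ‖e‖ = 1) :
      (φ' (‖x‖ ^ 2) • (2 : ℝ) • I + (φ'' • (2 : ℝ) • I x).smulRight ((2 : ℝ) • I x)) e e
      = 4 * φ'' * inner ℝ x e ^ 2 + 2 * φ' (‖x‖ ^ 2) := by
    simp [I, innerSL_apply_apply ℝ, he]
    ring
  refine (Finset.sum_congr rfl fun i _ ↦ hterm _ ((stdOrthonormalBasis ℝ E).norm_eq_one i)).trans ?_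
  rw [Finset.sum_add_distrib, ← Finset.mul_sum, (stdOrthonormalBasis ℝ E).sum_sq_inner_left]
  simp
  ring

theorem bilinTrace_comp_fderivCLM_fderivCLM (ψ : 𝓢(E, ℝ)) :
    bilinTrace E ∘ fderivCLM ℝ E _ (fderivCLM ℝ E ℝ ψ) = Δ ψ :=
  funext fun z ↦ by
    rw [laplacian_apply, laplacian_eq_bilinTrace (fun y ↦ ψ.hasFDerivAt (x := y))
      ((fderivCLM ℝ E ℝ ψ).hasFDerivAt (x := z))]
    rfl

theorem laplacian_eq_sum_fderiv_fderiv {ι : Type*} [Fintype ι] (b : OrthonormalBasis ι ℝ E)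
    {u : E → ℝ} (hu : ContDiff ℝ 2 u) (x : E) :
    Δ u x = ∑ i, fderiv ℝ (fun y ↦ fderiv ℝ u y (b i)) x (b i) := by
  have hu' : Differentiable ℝ (fderiv ℝ u) :=
    (hu.fderiv_right (m := 1) le_rfl).differentiable one_ne_zero
  rw [laplacian_eq_iteratedFDeriv_orthonormalBasis u b]
  refine Finset.sum_congr rfl fun i _ ↦ ?_
  rw [((hu' x).hasFDerivAt.clm_apply (hasFDerivAt_const _ x)).fderiv]
  simp [iteratedFDeriv_two_apply]

theorem lap_eq_laplacian {N : ℕ} {u : Euc N → ℝ} (hu : ContDiff ℝ 2 u) : lap N u = Δ u := by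
  ext x
  rw [laplacian_eq_sum_fderiv_fderiv (EuclideanSpace.basisFun (Fin N) ℝ) hu]
  simp only [lap, EuclideanSpace.basisFun_apply]

end Laplacian

section HeatKernel

open SchwartzMap InnerProductSpace Laplacian Module

variable {E : Type*} [NormedAddCommGroup E] [InnerProductSpace ℝ E]

variable (E) in
/-- The heat kernel `(4π)^(-d/2) exp (-‖z‖² / 4)` at time one. -/
def heatKernel : 𝓢(E, ℝ) :=
  ((4 * Real.pi) ^ (finrank ℝ E / 2 : ℝ))⁻¹ • gaussianSchwartz E (b := 1 / 4) (by norm_num)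

theorem heatKernel_apply (z : E) : heatKernel E z =
    ((4 * Real.pi) ^ (finrank ℝ E / 2 : ℝ))⁻¹ * Real.exp (-(1 / 4) * ‖z‖ ^ 2) := rfl

theorem heatKernel_pos (z : E) : 0 < heatKernel E z := by
  rw [heatKernel_apply]
  have := Real.pi_pos
  positivity

variable [FiniteDimensional ℝ E]

theorem integral_heatKernel [MeasurableSpace E] [BorelSpace E] : ∫ z, heatKernel E z = 1 := by
  simp only [heatKernel_apply]
  rw [integral_const_mul, GaussianFourier.integral_rexp_neg_mul_sq_norm (by norm_num),
    show Real.pi / (1 / 4) = 4 * Real.pi by ring]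
  exact inv_mul_cancel₀ (by have := Real.pi_pos; positivity)

theorem two_smul_laplacian_heatKernel_apply (z : E) : ((2 : ℝ) • Δ (heatKernel E)) z =
    -((finrank ℝ E : ℝ) • heatKernel E z + fderiv ℝ (heatKernel E) z z) := by
  set c := ((4 * Real.pi) ^ (finrank ℝ E / 2 : ℝ))⁻¹
  have hexp (t : ℝ) : HasDerivAt (fun t ↦ Real.exp (-(1 / 4) * t))
      (Real.exp (-(1 / 4) * t) * -(1 / 4)) t := by
    simpa only [mul_one] using ((hasDerivAt_id' t).const_mul (-(1 / 4) : ℝ)).exp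
  have hlap := laplacian_comp_norm_sq (x := z) (fun t _ ↦ (hexp t).const_mul c)
    (((hexp _).mul_const (-(1 / 4))).const_mul c)
  have hderiv : HasFDerivAt (heatKernel E) _ z :=
    ((hexp _).const_mul c).comp_hasFDerivAt z (hasFDerivAt_norm_sq z)
  rw [smul_apply, laplacian_apply, hderiv.fderiv]
  change (2 : ℝ) • Δ (fun y : E ↦ c * Real.exp (-(1 / 4) * ‖y‖ ^ 2)) z = _
  rw [hlap, heatKernel_apply]
  simp
  ring

end HeatKernel

section DilationPotential

open SchwartzMap Module

variable {E F G : Type*} [NormedAddCommGroup E] [InnerProductSpace ℝ E] [FiniteDimensional ℝ E]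
  [MeasurableSpace E] [BorelSpace E] [NormedAddCommGroup F] [NormedSpace ℝ F]
  [NormedAddCommGroup G] [NormedSpace ℝ G] {k ρ σ K : ℝ} {g : E → ℝ}

/-- The superposition `∫₀^∞ s^ρ e^{-k s²} (ψ-mean of g at scale s) ds`. The resolvent
`(k - Δ)⁻¹ g` and its first two derivatives are of this form, with `ρ = 1, 0, -1`. -/
def dilationPotential (k ρ : ℝ) (ψ : E → F) (g : E → ℝ) (x : E) : F :=
  ∫ s in Ioi (0 : ℝ), (s ^ ρ * Real.exp (-k * s ^ 2)) • dilationMean ψ g s x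

theorem norm_rpow_smul_dilationMean_le {ψ : E → F} {s : ℝ} (hs : 0 < s) {x : E}
    (hK : ‖dilationMean ψ g s x‖ ≤ K * s ^ σ) :
    ‖(s ^ ρ * Real.exp (-k * s ^ 2)) • dilationMean ψ g s x‖
      ≤ K * (s ^ (ρ + σ) * Real.exp (-k * s ^ 2)) := by
  rw [norm_smul, Real.norm_of_nonneg (by positivity), Real.rpow_add hs]
  calc s ^ ρ * Real.exp (-k * s ^ 2) * ‖dilationMean ψ g s x‖
      ≤ s ^ ρ * Real.exp (-k * s ^ 2) * (K * s ^ σ) := by gcongr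
    _ = _ := by ring

theorem integrableOn_mul_rpow_mul_exp_neg (hk : 0 < k) (hσ : -1 < ρ + σ) (K : ℝ) :
    IntegrableOn (fun s : ℝ ↦ K * (s ^ (ρ + σ) * Real.exp (-k * s ^ 2))) (Ioi 0) :=
  (integrableOn_rpow_mul_exp_neg_mul_sq hk hσ).const_mul K

theorem aestronglyMeasurable_rpow_smul_dilationMean (k ρ : ℝ) {ψ : E → F} (hψ : Continuous ψ)
    (hg : Measurable g) (x : E) : AEStronglyMeasurable
      (fun s ↦ (s ^ ρ * Real.exp (-k * s ^ 2)) • dilationMean ψ g s x)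
      (volume.restrict (Ioi 0)) := by
  have hweight : Measurable fun s : ℝ ↦ s ^ ρ * Real.exp (-k * s ^ 2) := by fun_prop
  exact (hweight.stronglyMeasurable.smul
    (stronglyMeasurable_dilationMean hψ hg x)).aestronglyMeasurable

theorem integrableOn_rpow_smul_dilationMean (hk : 0 < k) (hσ : -1 < ρ + σ) {ψ : E → F}
    (hψ : Continuous ψ) (hg : Measurable g) {x : E}
    (hK : ∀ s, 0 < s → ‖dilationMean ψ g s x‖ ≤ K * s ^ σ) :
    IntegrableOn (fun s ↦ (s ^ ρ * Real.exp (-k * s ^ 2)) • dilationMean ψ g s x) (Ioi 0) :=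
  (integrableOn_mul_rpow_mul_exp_neg hk hσ K).mono'
    (aestronglyMeasurable_rpow_smul_dilationMean k ρ hψ hg x)
    (ae_restrict_of_forall_mem measurableSet_Ioi fun s hs ↦
      norm_rpow_smul_dilationMean_le hs (hK s hs))

theorem norm_dilationPotential_le (hk : 0 < k) (hσ : -1 < ρ + σ) {ψ : E → F} {x : E}
    (hK : ∀ s, 0 < s → ‖dilationMean ψ g s x‖ ≤ K * s ^ σ) :
    ‖dilationPotential k ρ ψ g x‖
      ≤ ∫ s in Ioi (0 : ℝ), K * (s ^ (ρ + σ) * Real.exp (-k * s ^ 2)) :=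
  norm_integral_le_of_norm_le (integrableOn_mul_rpow_mul_exp_neg hk hσ K)
    (ae_restrict_of_forall_mem measurableSet_Ioi fun s hs ↦
      norm_rpow_smul_dilationMean_le hs (hK s hs))

theorem continuous_dilationPotential (hk : 0 < k) (hσ : -1 < ρ + σ) (ψ : 𝓢(E, F)) {B : ℝ}
    (hg : Continuous g) (hB : ∀ x, ‖g x‖ ≤ B)
    (hK : ∀ x s, 0 < s → ‖dilationMean ψ g s x‖ ≤ K * s ^ σ) :
    Continuous (dilationPotential k ρ ψ g) := by
  have hmean := continuous_dilationMean ψ.integrable hg hB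
  refine continuous_of_dominated
    (fun x ↦ aestronglyMeasurable_rpow_smul_dilationMean k ρ ψ.continuous hg.measurable x)
    (fun x ↦ ae_restrict_of_forall_mem measurableSet_Ioi fun s hs ↦
      norm_rpow_smul_dilationMean_le hs (hK x s hs))
    (integrableOn_mul_rpow_mul_exp_neg hk hσ K)
    (ae_of_all _ fun s ↦ (hmean.comp (by fun_prop : Continuous fun x : E ↦ (s, x))).const_smul _)

theorem hasFDerivAt_dilationPotential (hk : 0 < k) (hσ : -1 < ρ + σ) {K' σ' : ℝ}
    (hσ' : -1 < ρ - 1 + σ') (ψ : 𝓢(E, F)) {B : ℝ} (hg : Measurable g) (hB : ∀ x, ‖g x‖ ≤ B)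
    (hK : ∀ x s, 0 < s → ‖dilationMean ψ g s x‖ ≤ K * s ^ σ)
    (hK' : ∀ x s, 0 < s → ‖dilationMean (fderivCLM ℝ E F ψ) g s x‖ ≤ K' * s ^ σ') (x : E) :
    HasFDerivAt (dilationPotential k ρ ψ g)
      (-dilationPotential k (ρ - 1) (fderivCLM ℝ E F ψ) g x) x := by
  set ψ' := fderivCLM ℝ E F ψ
  rw [dilationPotential, ← integral_neg]
  refine hasFDerivAt_integral_of_dominated_of_fderiv_le (𝕜 := ℝ)
    (F' := fun x s ↦ -((s ^ (ρ - 1) * Real.exp (-k * s ^ 2)) • dilationMean ψ' g s x))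
    (bound := fun s ↦ K' * (s ^ (ρ - 1 + σ') * Real.exp (-k * s ^ 2))) univ_mem
    (Eventually.of_forall fun x ↦
      aestronglyMeasurable_rpow_smul_dilationMean k ρ ψ.continuous hg x)
    (integrableOn_rpow_smul_dilationMean hk hσ ψ.continuous hg (hK x))
    (aestronglyMeasurable_rpow_smul_dilationMean k _ ψ'.continuous hg x).neg
    (ae_restrict_of_forall_mem measurableSet_Ioi fun s hs x _ ↦ ?_)
    (integrableOn_mul_rpow_mul_exp_neg hk hσ' K')
    (ae_restrict_of_forall_mem measurableSet_Ioi fun s (hs : 0 < s) x _ ↦ ?_)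
  · rw [norm_neg]
    exact norm_rpow_smul_dilationMean_le hs (hK' x s hs)
  · refine ((hasFDerivAt_dilationMean ψ hg hB hs x).const_smul _).congr_fderiv ?_
    rw [Real.rpow_sub_one hs.ne']
    module

theorem clm_dilationMean [CompleteSpace F] [CompleteSpace G] (T : F →L[ℝ] G) {ψ : E → F} {B : ℝ}
    (hψ : Integrable ψ) (hg : Measurable g) (hB : ∀ x, ‖g x‖ ≤ B) (s : ℝ) (x : E) :
    T (dilationMean ψ g s x) = dilationMean (T ∘ ψ) g s x := by
  rw [dilationMean, ← T.integral_comp_comm (integrable_smul_comp_dilation hψ hg hB s x)]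
  simp only [map_smul, dilationMean, Function.comp_apply]

theorem clm_dilationPotential [CompleteSpace F] [CompleteSpace G] (T : F →L[ℝ] G) (hk : 0 < k)
    (hσ : -1 < ρ + σ) (ψ : 𝓢(E, F)) {B : ℝ} (hg : Measurable g) (hB : ∀ x, ‖g x‖ ≤ B) {x : E}
    (hK : ∀ s, 0 < s → ‖dilationMean ψ g s x‖ ≤ K * s ^ σ) :
    T (dilationPotential k ρ ψ g x) = dilationPotential k ρ (T ∘ ψ) g x := by
  rw [dilationPotential, ← T.integral_comp_comm
    (integrableOn_rpow_smul_dilationMean hk hσ ψ.continuous hg hK)]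
  simp only [map_smul, clm_dilationMean T ψ.integrable hg hB, dilationPotential]

end DilationPotential

section Resolvent

open SchwartzMap Module InnerProductSpace Laplacian

variable {E F : Type*} [NormedAddCommGroup E] [InnerProductSpace ℝ E] [FiniteDimensional ℝ E]
  [MeasurableSpace E] [BorelSpace E] [NormedAddCommGroup F] [NormedSpace ℝ F]
  {k B : ℝ} {g h : E → ℝ}

theorem norm_dilationMean_le_mul_rpow_zero (ψ : 𝓢(E, F)) (hB : ∀ x, ‖g x‖ ≤ B) (x : E) (s : ℝ) :
    ‖dilationMean ψ g s x‖ ≤ (B * ∫ z, ‖ψ z‖) * s ^ (0 : ℝ) := by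
  simpa only [Real.rpow_zero, mul_one] using norm_dilationMean_le ψ.integrable hB s x

theorem integrable_norm_rpow_mul_norm (ψ : 𝓢(E, F)) (β : ℝ≥0) :
    Integrable fun z ↦ ‖z‖ ^ (β : ℝ) * ‖ψ z‖ := by
  refine (ψ.integrable.norm.add (ψ.integrable_pow_mul volume ⌈β⌉₊)).mono'
    (Continuous.aestronglyMeasurable (by fun_prop (disch := simp))) (ae_of_all _ fun z ↦ ?_)
  have hpow : ‖z‖ ^ (β : ℝ) ≤ 1 + ‖z‖ ^ ⌈β⌉₊ := by
    rcases le_total ‖z‖ 1 with hz | hz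
    · exact (Real.rpow_le_one (norm_nonneg z) hz β.2).trans (le_add_of_nonneg_right (by positivity))
    · rw [← Real.rpow_natCast]
      exact (Real.rpow_le_rpow_of_exponent_le hz (mod_cast Nat.le_ceil β)).trans
        (le_add_of_nonneg_left zero_le_one)
  rw [Real.norm_of_nonneg (by positivity)]
  calc ‖z‖ ^ (β : ℝ) * ‖ψ z‖ ≤ (1 + ‖z‖ ^ ⌈β⌉₊) * ‖ψ z‖ := by gcongr
    _ = ‖ψ z‖ + ‖z‖ ^ ⌈β⌉₊ * ‖ψ z‖ := by ring

/-- The resolvent `(k - Δ)⁻¹ g`, written as the Laplace transform `∫₀^∞ e^{-k t} (e^{tΔ} g)(x) dt`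
of the heat semigroup after the substitution `t = s²`. -/
def heatResolvent (k : ℝ) (g : E → ℝ) (x : E) : ℝ :=
  2 * dilationPotential k 1 (heatKernel E) g x

theorem integrableOn_heatResolvent (hk : 0 < k) (hg : Measurable g) (hB : ∀ x, ‖g x‖ ≤ B) (x : E) :
    IntegrableOn (fun s : ℝ ↦ (s ^ (1 : ℝ) * Real.exp (-k * s ^ 2)) •
      dilationMean (heatKernel E) g s x) (Ioi 0) :=
  integrableOn_rpow_smul_dilationMean hk (by norm_num) (heatKernel E).continuous hg
    fun s _ ↦ norm_dilationMean_le_mul_rpow_zero (heatKernel E) hB x s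

theorem heatResolvent_mono (hk : 0 < k) {B' : ℝ} (hg : Measurable g) (hh : Measurable h)
    (hB : ∀ x, ‖g x‖ ≤ B) (hB' : ∀ x, ‖h x‖ ≤ B') (hgh : ∀ x, g x ≤ h x) (x : E) :
    heatResolvent k g x ≤ heatResolvent k h x := by
  refine mul_le_mul_of_nonneg_left (setIntegral_mono_on (integrableOn_heatResolvent hk hg hB x)
    (integrableOn_heatResolvent hk hh hB' x) measurableSet_Ioi fun s (hs : 0 < s) ↦ ?_) zero_le_two
  have hmean : dilationMean (heatKernel E) g s x ≤ dilationMean (heatKernel E) h s x :=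
    integral_mono (integrable_smul_comp_dilation (heatKernel E).integrable hg hB s x)
      (integrable_smul_comp_dilation (heatKernel E).integrable hh hB' s x)
      fun z ↦ mul_le_mul_of_nonneg_right (hgh _) (heatKernel_pos z).le
  exact mul_le_mul_of_nonneg_left hmean (by positivity)

theorem heatResolvent_const (hk : 0 < k) (c : ℝ) (x : E) :
    heatResolvent k (fun _ ↦ c) x = c / k := by
  have hweight := integral_rpow_mul_exp_neg_mul_rpow (p := 2) (q := 1) two_pos (by norm_num) hk
  simp only [Real.rpow_two] at hweight
  simp only [heatResolvent, dilationPotential, dilationMean_const, integral_heatKernel, smul_eq_mul,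
    mul_one]
  rw [integral_mul_const, hweight]
  norm_num [Real.rpow_neg_one]
  ring

theorem tendsto_heatResolvent (hk : 0 < k) {g : ℕ → E → ℝ} (hg : ∀ n, Measurable (g n))
    (hB : ∀ n x, ‖g n x‖ ≤ B) (hgh : ∀ x, Tendsto (fun n ↦ g n x) atTop (𝓝 (h x))) (x : E) :
    Tendsto (fun n ↦ heatResolvent k (g n) x) atTop (𝓝 (heatResolvent k h x)) := by
  have hγ := (heatKernel E).integrable (μ := volume)
  have hmean (s : ℝ) : Tendsto (fun n ↦ dilationMean (heatKernel E) (g n) s x) atTop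
      (𝓝 (dilationMean (heatKernel E) h s x)) := by
    refine tendsto_integral_of_dominated_convergence (fun z ↦ B * ‖heatKernel E z‖)
      (fun n ↦ (integrable_smul_comp_dilation hγ (hg n) (hB n) s x).aestronglyMeasurable)
      (hγ.norm.const_mul B) (fun n ↦ ae_of_all _ fun z ↦ ?_)
      (ae_of_all _ fun z ↦ (hgh _).smul_const _)
    rw [norm_smul]
    gcongr
    exact hB n _
  exact (tendsto_integral_of_dominated_convergence _
    (fun n ↦ (integrableOn_heatResolvent hk (hg n) (hB n) x).aestronglyMeasurable)
    (integrableOn_mul_rpow_mul_exp_neg (ρ := 1) (σ := 0) hk (by norm_num) _)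
    (fun n ↦ ae_restrict_of_forall_mem measurableSet_Ioi fun s hs ↦
      norm_rpow_smul_dilationMean_le hs (norm_dilationMean_le_mul_rpow_zero _ (hB n) x s))
    (ae_of_all _ fun s ↦ (hmean s).const_smul _)).const_mul 2

theorem heatResolvent_pos (hk : 0 < k) (hg : Continuous g) (hB : ∀ x, ‖g x‖ ≤ B)
    (hg0 : ∀ x, 0 ≤ g x) {y : E} (hy : 0 < g y) (x : E) : 0 < heatResolvent k g x := by
  have hmean {s : ℝ} (hs : 0 < s) : 0 < dilationMean (heatKernel E) g s x := by
    refine integral_pos_of_integrable_nonneg_nonzero (x := s⁻¹ • (y - x)) (by fun_prop)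
      (integrable_smul_comp_dilation (heatKernel E).integrable hg.measurable hB s x)
      (fun z ↦ mul_nonneg (hg0 _) (heatKernel_pos z).le) ?_
    rw [smul_inv_smul₀ hs.ne', add_sub_cancel, smul_eq_mul]
    exact (mul_pos hy (heatKernel_pos _)).ne'
  have hpos : ∀ s ∈ Ioi (0 : ℝ), 0 < (s ^ (1 : ℝ) * Real.exp (-k * s ^ 2)) •
      dilationMean (heatKernel E) g s x := fun s (hs : 0 < s) ↦
    smul_pos (by positivity) (hmean hs)
  refine mul_pos two_pos ((setIntegral_pos_iff_support_of_nonneg_ae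
    (ae_restrict_of_forall_mem measurableSet_Ioi fun s hs ↦ (hpos s hs).le)
    (integrableOn_heatResolvent hk hg.measurable hB x)).2 ?_)
  rw [inter_eq_right.2 fun s hs ↦ Function.mem_support.2 (hpos s hs).ne']
  simp

theorem hasFDerivAt_heatResolvent (hk : 0 < k) (hg : Measurable g) (hB : ∀ x, ‖g x‖ ≤ B) (x : E) :
    HasFDerivAt (heatResolvent k g)
      (-(2 : ℝ) • dilationPotential k 0 (fderivCLM ℝ E ℝ (heatKernel E)) g x) x := by
  have hderiv := hasFDerivAt_dilationPotential (ρ := 1) (σ := 0) (σ' := 0) hk (by norm_num)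
    (by norm_num) (heatKernel E) hg hB
    (fun x s _ ↦ norm_dilationMean_le_mul_rpow_zero _ hB x s)
    (fun x s _ ↦ norm_dilationMean_le_mul_rpow_zero _ hB x s) x
  rw [sub_self] at hderiv
  exact (hderiv.const_mul 2).congr_fderiv (by module)

theorem exists_lipschitzWith_heatResolvent (hk : 0 < k) (hg : Measurable g) (hB : ∀ x, ‖g x‖ ≤ B) :
    ∃ L : ℝ≥0, LipschitzWith L (heatResolvent k g) := by
  have hbound (x : E) := norm_dilationPotential_le (ρ := 0) (σ := 0) (x := x) hk (by norm_num)
    fun s _ ↦ norm_dilationMean_le_mul_rpow_zero (fderivCLM ℝ E ℝ (heatKernel E)) hB x s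
  set C := ∫ s in Ioi (0 : ℝ), (B * ∫ z, ‖fderivCLM ℝ E ℝ (heatKernel E) z‖) *
    (s ^ (0 + 0 : ℝ) * Real.exp (-k * s ^ 2))
  refine ⟨Real.toNNReal (2 * C), lipschitzWith_of_nnnorm_fderiv_le (𝕜 := ℝ)
    (fun x ↦ (hasFDerivAt_heatResolvent hk hg hB x).differentiableAt) fun x ↦ ?_⟩
  rw [(hasFDerivAt_heatResolvent hk hg hB x).fderiv, ← NNReal.coe_le_coe, coe_nnnorm, norm_smul]
  refine le_trans ?_ (Real.le_coe_toNNReal _)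
  norm_num
  exact hbound x

section Holder

variable {C β : ℝ≥0}

theorem norm_dilationMean_le_mul_rpow (ψ : 𝓢(E, F)) (hψ0 : ∫ z, ψ z = 0)
    (hg : Measurable g) (hB : ∀ x, ‖g x‖ ≤ B) (hC : HolderWith C β g) (x : E) (s : ℝ) (hs : 0 < s) :
    ‖dilationMean ψ g s x‖ ≤ (C * ∫ z, ‖z‖ ^ (β : ℝ) * ‖ψ z‖) * s ^ (β : ℝ) :=
  norm_dilationMean_le_of_holderWith ψ.integrable (integrable_norm_rpow_mul_norm ψ β) hψ0 hg hB hC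
    hs.le x

theorem hasFDerivAt_fderiv_heatResolvent (hk : 0 < k) (hβ : 0 < β) (hg : Measurable g)
    (hB : ∀ x, ‖g x‖ ≤ B) (hC : HolderWith C β g) (x : E) :
    HasFDerivAt
      (fun x ↦ -(2 : ℝ) • dilationPotential k 0 (fderivCLM ℝ E ℝ (heatKernel E)) g x)
      ((2 : ℝ) • dilationPotential k (-1)
        (fderivCLM ℝ E _ (fderivCLM ℝ E ℝ (heatKernel E))) g x) x := by
  have hderiv := hasFDerivAt_dilationPotential (ρ := 0) (σ := 0) (σ' := β) hk (by norm_num)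
    (by simpa using hβ) (fderivCLM ℝ E ℝ (heatKernel E)) hg hB
    (fun x s _ ↦ norm_dilationMean_le_mul_rpow_zero _ hB x s)
    (norm_dilationMean_le_mul_rpow _ (integral_fderivCLM_eq_zero _) hg hB hC) x
  rw [zero_sub] at hderiv
  exact (hderiv.const_smul (-(2 : ℝ))).congr_fderiv (by module)

theorem contDiff_two_heatResolvent (hk : 0 < k) (hβ : 0 < β) (hB : ∀ x, ‖g x‖ ≤ B)
    (hC : HolderWith C β g) : ContDiff ℝ 2 (heatResolvent k g) := by
  have hg := hC.continuous hβ
  have hfst := hasFDerivAt_heatResolvent hk hg.measurable hB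
  have hsnd := hasFDerivAt_fderiv_heatResolvent hk hβ hg.measurable hB hC
  have hcont := continuous_dilationPotential (ρ := -1) (σ := β) hk (by simpa using hβ)
    (fderivCLM ℝ E _ (fderivCLM ℝ E ℝ (heatKernel E))) hg hB
    (norm_dilationMean_le_mul_rpow _ (integral_fderivCLM_eq_zero _) hg.measurable hB hC)
  rw [show (2 : WithTop ℕ∞) = 1 + 1 from rfl, contDiff_succ_iff_fderiv]
  refine ⟨fun x ↦ (hfst x).differentiableAt, by simp, ?_⟩
  rw [funext fun x ↦ (hfst x).fderiv, contDiff_one_iff_fderiv, funext fun x ↦ (hsnd x).fderiv]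
  exact ⟨fun x ↦ (hsnd x).differentiableAt, hcont.fun_const_smul _⟩

theorem integral_laplacian_eq_zero (ψ : 𝓢(E, ℝ)) : ∫ z, (Δ ψ) z = 0 := by
  have hint : Integrable (fderivCLM ℝ E _ (fderivCLM ℝ E ℝ ψ)) := SchwartzMap.integrable _
  rw [← bilinTrace_comp_fderivCLM_fderivCLM]
  exact ((bilinTrace E).integral_comp_comm hint).trans
    (by rw [integral_fderivCLM_eq_zero, map_zero])

theorem laplacian_heatResolvent_eq_dilationPotential (hk : 0 < k) (hβ : 0 < β) (hg : Measurable g)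
    (hB : ∀ x, ‖g x‖ ≤ B) (hC : HolderWith C β g) (x : E) :
    Δ (heatResolvent k g) x = 2 * dilationPotential k (-1) (Δ (heatKernel E) : 𝓢(E, ℝ)) g x := by
  rw [laplacian_eq_bilinTrace (hasFDerivAt_heatResolvent hk hg hB)
    (hasFDerivAt_fderiv_heatResolvent hk hβ hg hB hC x), map_smul, smul_eq_mul,
    clm_dilationPotential (bilinTrace E) hk (by simpa using hβ) _ hg hB fun s hs ↦
      norm_dilationMean_le_mul_rpow _ (integral_fderivCLM_eq_zero _) hg hB hC x s hs,
    bilinTrace_comp_fderivCLM_fderivCLM]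

theorem hasDerivAt_exp_mul_dilationMean_heatKernel (hg : Measurable g) (hB : ∀ x, ‖g x‖ ≤ B)
    (x : E) {s : ℝ} (hs : 0 < s) :
    HasDerivAt (fun s ↦ Real.exp (-k * s ^ 2) * dilationMean (heatKernel E) g s x)
      (2 * ((s ^ (-1 : ℝ) * Real.exp (-k * s ^ 2)) •
          dilationMean (Δ (heatKernel E) : 𝓢(E, ℝ)) g s x) -
        k * (2 * ((s ^ (1 : ℝ) * Real.exp (-k * s ^ 2)) • dilationMean (heatKernel E) g s x)))
      s := by
  have hexp := ((hasDerivAt_pow 2 s).const_mul (-k)).exp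
  have hmean := hasDerivAt_dilationMean two_smul_laplacian_heatKernel_apply hg hB hs x
  have htwo : dilationMean ((2 : ℝ) • Δ (heatKernel E) : 𝓢(E, ℝ)) g s x
      = 2 * dilationMean (Δ (heatKernel E) : 𝓢(E, ℝ)) g s x := by
    simp only [dilationMean, smul_apply, smul_eq_mul, ← integral_const_mul, mul_left_comm]
  refine (hexp.mul hmean).congr_deriv ?_
  rw [htwo, Real.rpow_neg_one, Real.rpow_one]
  simp only [smul_eq_mul]
  push_cast
  ring

theorem laplacian_heatResolvent (hk : 0 < k) (hβ : 0 < β) (hB : ∀ x, ‖g x‖ ≤ B)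
    (hC : HolderWith C β g) (x : E) : Δ (heatResolvent k g) x = k * heatResolvent k g x - g x := by
  have hg := hC.continuous hβ
  have hlap := (integrableOn_rpow_smul_dilationMean (ρ := -1) (σ := β) (x := x) hk
    (by simpa using hβ) (Δ (heatKernel E) : 𝓢(E, ℝ)).continuous hg.measurable
    (norm_dilationMean_le_mul_rpow _ (integral_laplacian_eq_zero _) hg.measurable hB hC
      x)).const_mul 2
  have hres := (integrableOn_heatResolvent hk hg.measurable hB x).const_mul 2
  have hcont : Continuous fun s ↦ dilationMean (heatKernel E) g s x :=
    (continuous_dilationMean (heatKernel E).integrable hg hB).comp (Continuous.prodMk_left x)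
  have hexp : Tendsto (fun s : ℝ ↦ Real.exp (-k * s ^ 2)) atTop (𝓝 0) :=
    Real.tendsto_exp_atBot.comp
      ((tendsto_pow_atTop two_ne_zero).const_mul_atTop_of_neg (neg_lt_zero.2 hk))
  have hlim : Tendsto (fun s ↦ Real.exp (-k * s ^ 2) * dilationMean (heatKernel E) g s x)
      atTop (𝓝 0) :=
    hexp.zero_mul_isBoundedUnder_le (isBoundedUnder_of
      ⟨_, fun s ↦ norm_dilationMean_le (heatKernel E).integrable hB s x⟩)
  have hftc := integral_Ioi_of_hasDerivAt_of_tendsto (a := 0)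
    (Continuous.continuousWithinAt (by fun_prop))
    (fun s hs ↦ hasDerivAt_exp_mul_dilationMean_heatKernel hg.measurable hB x hs)
    (hlap.sub (hres.const_mul k)) hlim
  rw [integral_sub hlap (hres.const_mul k), integral_const_mul, integral_const_mul,
    integral_const_mul, dilationMean_zero, integral_heatKernel, zero_pow two_ne_zero, mul_zero,
    Real.exp_zero, smul_eq_mul, mul_one, one_mul, zero_sub] at hftc
  rw [laplacian_heatResolvent_eq_dilationPotential hk hβ hg.measurable hB hC]
  exact (sub_eq_iff_eq_add'.1 hftc).trans (sub_eq_add_neg _ _).symm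

end Holder

end Resolvent

section MaximumPrinciple

open Module InnerProductSpace Laplacian

theorem deriv_deriv_nonpos_of_isLocalMax {φ : ℝ → ℝ} {t : ℝ} (hφ : ContinuousAt φ t)
    (ht : IsLocalMax φ t) : deriv (deriv φ) t ≤ 0 := by
  by_contra! hpos
  have hmin : IsLocalMin φ t := isLocalMin_of_deriv_deriv_pos hpos ht.deriv_eq_zero hφ
  have hconst : φ =ᶠ[𝓝 t] fun _ ↦ φ t := by
    filter_upwards [ht, hmin] with s hle hge using le_antisymm hle hge
  have hzero := hconst.deriv.deriv_eq
  simp only [deriv_const'] at hzero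
  exact hpos.ne' hzero

variable {E : Type*} [NormedAddCommGroup E]

theorem hasDerivAt_comp_add_smul [NormedSpace ℝ E] {u : E → ℝ} (hu : Differentiable ℝ u) (x e : E)
    (t : ℝ) : HasDerivAt (fun t : ℝ ↦ u (x + t • e)) (fderiv ℝ u (x + t • e) e) t := by
  have hline : HasDerivAt (fun t : ℝ ↦ x + t • e) e t := by
    simpa using ((hasDerivAt_id t).smul_const e).const_add x
  exact (hu _).hasFDerivAt.comp_hasDerivAt t hline

theorem contDiff_one_fderiv_apply [NormedSpace ℝ E] {u : E → ℝ} (hu : ContDiff ℝ 2 u) (e : E) :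
    ContDiff ℝ 1 fun y ↦ fderiv ℝ u y e :=
  (hu.fderiv_right le_rfl).clm_apply contDiff_const

variable [InnerProductSpace ℝ E] [FiniteDimensional ℝ E]

theorem laplacian_nonpos_of_isLocalMax {u : E → ℝ} (hu : ContDiff ℝ 2 u) {x : E}
    (hx : IsLocalMax u x) : Δ u x ≤ 0 := by
  rw [laplacian_eq_sum_fderiv_fderiv (stdOrthonormalBasis ℝ E) hu]
  refine Finset.sum_nonpos fun i _ ↦ ?_
  set e := stdOrthonormalBasis ℝ E i
  have hfst := hasDerivAt_comp_add_smul (hu.differentiable two_ne_zero) x e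
  have hsnd := hasDerivAt_comp_add_smul
    ((contDiff_one_fderiv_apply hu e).differentiable one_ne_zero) x e 0
  have hmax : IsLocalMax (fun t : ℝ ↦ u (x + t • e)) 0 :=
    IsLocalMax.comp_continuous (f := u) (g := fun t : ℝ ↦ x + t • e) (by simpa using hx)
      (Continuous.continuousAt (by fun_prop))
  have hle := deriv_deriv_nonpos_of_isLocalMax (hfst 0).continuousAt hmax
  rwa [funext fun t ↦ (hfst t).deriv, hsnd.deriv, zero_smul, add_zero] at hle

theorem laplacian_one_add_norm_sq (x : E) :
    Δ (fun y : E ↦ (1 + ‖y‖ ^ 2 : ℝ)) x = 2 * finrank ℝ E := by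
  rw [laplacian_comp_norm_sq (φ := fun t ↦ 1 + t) (fun t _ ↦ (hasDerivAt_id t).const_add 1)
    (hasDerivAt_const (‖x‖ ^ 2) (1 : ℝ)), mul_zero, zero_add, mul_one]

theorem tendsto_one_add_norm_sq_cocompact :
    Tendsto (fun y : E ↦ 1 + ‖y‖ ^ 2) (cocompact E) atTop :=
  tendsto_atTop_add_const_left _ _
    ((tendsto_pow_atTop two_ne_zero).comp tendsto_norm_cocompact_atTop)

theorem nonpos_of_mul_le_laplacian {k B : ℝ} (hk : 0 < k) {z : E → ℝ} (hz : ContDiff ℝ 2 z)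
    (hB : ∀ x, z x ≤ B) (h : ∀ x, k * z x ≤ Δ z x) (x : E) : z x ≤ 0 := by
  set p : E → ℝ := fun y ↦ 1 + ‖y‖ ^ 2
  have hp : ContDiff ℝ 2 p := contDiff_const.add (contDiff_norm_sq ℝ)
  have hbound (ε : ℝ) (hε : 0 < ε) : z x ≤ ε * (p x + 2 * finrank ℝ E / k) := by
    have hεp : ContDiff ℝ 2 (ε • p) := hp.const_smul ε
    have hlim : Tendsto (z - ε • p) (cocompact E) atBot :=
      tendsto_atBot_mono (fun y ↦ sub_le_sub_right (hB y) _)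
        (tendsto_atBot_add_const_left _ B
          (tendsto_neg_atTop_atBot.comp (tendsto_one_add_norm_sq_cocompact.const_mul_atTop hε)))
    obtain ⟨m, hm⟩ := (hz.sub hεp).continuous.exists_forall_ge hlim
    have hΔ : Δ z m - ε * (2 * finrank ℝ E) ≤ 0 := by
      have hle : Δ (z - ε • p) m ≤ 0 :=
        laplacian_nonpos_of_isLocalMax (hz.sub hεp) (.of_forall hm)
      rw [hz.contDiffAt.laplacian_sub hεp.contDiffAt, laplacian_smul ε hp.contDiffAt,
        smul_eq_mul, laplacian_one_add_norm_sq] at hle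
      exact hle
    have hzm : z m ≤ ε * (2 * finrank ℝ E / k) := by
      rw [mul_div_assoc', le_div_iff₀ hk]
      linarith [h m]
    have hmx : z x - ε * p x ≤ z m - ε * p m := hm x
    have hpm : 0 ≤ ε * p m := by positivity
    linarith
  have hlim : Tendsto (fun ε ↦ ε * (p x + 2 * finrank ℝ E / k)) (𝓝[>] 0) (𝓝 0) :=
    tendsto_nhdsWithin_of_tendsto_nhds (Continuous.tendsto' (by fun_prop) _ _ (zero_mul _))
  exact ge_of_tendsto hlim (eventually_mem_nhdsWithin.mono hbound)

end MaximumPrinciple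

section Picone

open InnerProductSpace Laplacian

variable {E : Type*} [NormedAddCommGroup E] [InnerProductSpace ℝ E] [FiniteDimensional ℝ E]

theorem continuous_gradient {v : E → ℝ} (hv : ContDiff ℝ 1 v) : Continuous (gradient v) :=
  (toDual ℝ E).symm.continuous.comp (hv.continuous_fderiv one_ne_zero)

theorem continuous_laplacian {w : E → ℝ} (hw : ContDiff ℝ 2 w) : Continuous (Δ w) := by
  simp only [funext (laplacian_eq_sum_fderiv_fderiv (stdOrthonormalBasis ℝ E) hw)]
  exact continuous_finsetSum _ fun i _ ↦
    ((contDiff_one_fderiv_apply hw _).continuous_fderiv one_ne_zero).clm_apply continuous_const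

theorem hasCompactSupport_gradient {v : E → ℝ} (hv : HasCompactSupport v) :
    HasCompactSupport (gradient v) :=
  (hv.fderiv (𝕜 := ℝ)).comp_left (map_zero (toDual ℝ E).symm)

theorem inner_gradient_sq_div_le {φ w : E → ℝ} {x : E} (hφ : DifferentiableAt ℝ φ x)
    (hw : DifferentiableAt ℝ w x) (hwx : w x ≠ 0) :
    inner ℝ (gradient (fun y ↦ φ y ^ 2 / w y) x) (gradient w x) ≤ ‖gradient φ x‖ ^ 2 := by
  have hinner : inner ℝ (gradient (fun y ↦ φ y ^ 2 / w y) x) (gradient w x)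
      = 2 * (φ x / w x * inner ℝ (gradient φ x) (gradient w x))
        - (φ x / w x) ^ 2 * ‖gradient w x‖ ^ 2 := by
    have hd := (hφ.hasFDerivAt.pow 2).mul ((hasDerivAt_inv hwx).comp_hasFDerivAt x hw.hasFDerivAt)
    rw [inner_gradient_left, inner_gradient_left, ← real_inner_self_eq_norm_sq,
      inner_gradient_left]
    simp only [div_eq_mul_inv]
    refine (congrArg (· (gradient w x)) hd.fderiv).trans ?_
    simp only [neg_smul, smul_neg, Function.comp_apply, Nat.add_one_sub_one, pow_one,
      nsmul_eq_mul, Nat.cast_ofNat, add_apply, neg_apply, smul_apply, smul_eq_mul]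
    ring
  have hsq := sq_nonneg ‖gradient φ x - (φ x / w x) • gradient w x‖
  rw [norm_sub_sq_real, inner_smul_right, norm_smul, mul_pow, Real.norm_eq_abs, sq_abs] at hsq
  linarith

variable [MeasurableSpace E] [BorelSpace E]

theorem integral_mul_fderiv_apply_eq_neg {v g : E → ℝ} (hv : ContDiff ℝ 1 v)
    (hvc : HasCompactSupport v) (hg : ContDiff ℝ 1 g) (e : E) :
    ∫ x, v x * fderiv ℝ g x e = -∫ x, fderiv ℝ v x e * g x := by
  have hv' := (hv.continuous_fderiv one_ne_zero).clm_apply (continuous_const (y := e))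
  have hg' := (hg.continuous_fderiv one_ne_zero).clm_apply (continuous_const (y := e))
  have hvc' : HasCompactSupport fun x ↦ fderiv ℝ v x e := hvc.fderiv_apply ℝ e
  exact integral_mul_fderiv_eq_neg_fderiv_mul_of_integrable
    ((hv'.mul hg.continuous).integrable_of_hasCompactSupport hvc'.mul_right)
    ((hv.continuous.mul hg').integrable_of_hasCompactSupport hvc.mul_right)
    ((hv.continuous.mul hg.continuous).integrable_of_hasCompactSupport hvc.mul_right)
    (fun x _ ↦ hv.differentiable one_ne_zero x) (fun x _ ↦ hg.differentiable one_ne_zero x)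

theorem integral_mul_laplacian_eq_neg_integral_inner {v w : E → ℝ} (hv : ContDiff ℝ 1 v)
    (hvc : HasCompactSupport v) (hw : ContDiff ℝ 2 w) :
    ∫ x, v x * Δ w x = -∫ x, inner ℝ (gradient v x) (gradient w x) := by
  let b := stdOrthonormalBasis ℝ E
  have hw' (i) : ContDiff ℝ 1 fun y ↦ fderiv ℝ w y (b i) := contDiff_one_fderiv_apply hw (b i)
  have hinner (x : E) : inner ℝ (gradient v x) (gradient w x)
      = ∑ i, fderiv ℝ v x (b i) * fderiv ℝ w x (b i) :=
    (b.sum_inner_mul_inner _ _).symm.trans (Finset.sum_congr rfl fun i _ ↦ by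
      rw [inner_gradient_left, inner_gradient_right, conj_trivial])
  simp_rw [laplacian_eq_sum_fderiv_fderiv b hw, hinner, Finset.mul_sum]
  rw [integral_finsetSum, integral_finsetSum, ← Finset.sum_neg_distrib]
  · exact Finset.sum_congr rfl fun i _ ↦ integral_mul_fderiv_apply_eq_neg hv hvc (hw' i) (b i)
  · exact fun i _ ↦ ((hv.continuous_fderiv one_ne_zero).clm_apply continuous_const |>.mul
      (hw' i).continuous).integrable_of_hasCompactSupport (hvc.fderiv_apply ℝ (b i)).mul_right
  · exact fun i _ ↦ (hv.continuous.mul (((hw' i).continuous_fderiv one_ne_zero).clm_apply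
      continuous_const)).integrable_of_hasCompactSupport hvc.mul_right

theorem integrable_norm_gradient_sq {φ : E → ℝ} (hφ : ContDiff ℝ 1 φ)
    (hφc : HasCompactSupport φ) : Integrable fun x ↦ ‖gradient φ x‖ ^ 2 := by
  have hcont : Continuous fun x ↦ ‖gradient φ x‖ ^ 2 := (continuous_gradient hφ).norm.pow 2
  have hsupp : HasCompactSupport fun x ↦ ‖gradient φ x‖ ^ 2 :=
    (hasCompactSupport_gradient hφc).comp_left (g := fun v : E ↦ ‖v‖ ^ 2) (by simp)
  exact hcont.integrable_of_hasCompactSupport hsupp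

theorem integral_mul_sq_le_integral_norm_gradient_sq {φ w q : E → ℝ} (hφ : ContDiff ℝ 1 φ)
    (hφc : HasCompactSupport φ) (hw : ContDiff ℝ 2 w) (hpos : ∀ x, 0 < w x) (hq : Continuous q)
    (h : ∀ x, q x * w x ≤ -Δ w x) :
    ∫ x, q x * φ x ^ 2 ≤ ∫ x, ‖gradient φ x‖ ^ 2 := by
  have hw₁ : ContDiff ℝ 1 w := hw.of_le one_le_two
  have hφ₂ : HasCompactSupport fun x ↦ φ x ^ 2 :=
    hφc.comp_left (g := (· ^ 2)) (zero_pow two_ne_zero)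
  have hv : ContDiff ℝ 1 fun x ↦ φ x ^ 2 / w x := (hφ.pow 2).div hw₁ fun x ↦ (hpos x).ne'
  have hvc : HasCompactSupport fun x ↦ φ x ^ 2 / w x := by
    simp only [div_eq_mul_inv]
    exact hφ₂.mul_right
  have hqφ : Integrable fun x ↦ q x * φ x ^ 2 :=
    (hq.mul (hφ.continuous.pow 2)).integrable_of_hasCompactSupport hφ₂.mul_left
  have hlap : Integrable fun x ↦ φ x ^ 2 / w x * Δ w x :=
    (hv.continuous.mul (continuous_laplacian hw)).integrable_of_hasCompactSupport hvc.mul_right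
  have hinner : Integrable fun x ↦ inner ℝ (gradient (fun y ↦ φ y ^ 2 / w y) x) (gradient w x) :=
    ((continuous_gradient hv).inner (continuous_gradient hw₁)).integrable_of_hasCompactSupport
      ((hasCompactSupport_gradient hvc).mono' (Function.support_subset_iff'.2 fun x hx ↦ by
        rw [image_eq_zero_of_notMem_tsupport hx, inner_zero_left]))
  have hle (x : E) : q x * φ x ^ 2 ≤ -(φ x ^ 2 / w x * Δ w x) := by
    have := hpos x
    calc q x * φ x ^ 2 = φ x ^ 2 / w x * (q x * w x) := by field_simp
      _ ≤ φ x ^ 2 / w x * -Δ w x := by gcongr; exact h x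
      _ = -(φ x ^ 2 / w x * Δ w x) := mul_neg _ _
  calc ∫ x, q x * φ x ^ 2
      ≤ ∫ x, -(φ x ^ 2 / w x * Δ w x) := integral_mono hqφ hlap.neg hle
    _ = ∫ x, inner ℝ (gradient (fun y ↦ φ y ^ 2 / w y) x) (gradient w x) := by
        rw [integral_neg, integral_mul_laplacian_eq_neg_integral_inner hv hvc hw, neg_neg]
    _ ≤ ∫ x, ‖gradient φ x‖ ^ 2 := integral_mono hinner (integrable_norm_gradient_sq hφ hφc) fun x ↦
        inner_gradient_sq_div_le (hφ.differentiable one_ne_zero x)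
          (hw₁.differentiable one_ne_zero x) (hpos x).ne'

end Picone

section Supersolution

open Module InnerProductSpace Laplacian

variable {E : Type*} [NormedAddCommGroup E]

theorem one_add_norm_sq_rpow_le_one {p : ℝ} (hp : p ≤ 0) (x : E) : (1 + ‖x‖ ^ 2) ^ p ≤ 1 :=
  Real.rpow_le_one_of_one_le_of_nonpos (le_add_of_nonneg_right (sq_nonneg _)) hp

theorem le_mul_one_add_norm_sq_rpow {v : E → ℝ} {A C α p : ℝ} (hA : 0 ≤ A) (hC : 0 ≤ C)
    (hvC : ∀ x, v x ≤ C) (hvA : ∀ x ≠ 0, v x ≤ A * ‖x‖ ^ (-2 - α)) (hp : p ≤ 1)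
    (hpα : -α ≤ 2 * p) (x : E) :
    v x ≤ (A + C) * 2 ^ (1 - p) * (1 + ‖x‖ ^ 2) ^ (p - 1) := by
  have hcomp {r : ℝ} (hr : 0 < r) (hxr : 1 + ‖x‖ ^ 2 ≤ 2 * r) :
      r ^ (p - 1) ≤ 2 ^ (1 - p) * (1 + ‖x‖ ^ 2) ^ (p - 1) := by
    calc r ^ (p - 1) = 2 ^ (1 - p) * (2 * r) ^ (p - 1) := by
          rw [Real.mul_rpow zero_le_two hr.le, ← mul_assoc, ← Real.rpow_add two_pos,
            sub_add_sub_cancel, sub_self, Real.rpow_zero, one_mul]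
      _ ≤ 2 ^ (1 - p) * (1 + ‖x‖ ^ 2) ^ (p - 1) := by
          exact mul_le_mul_of_nonneg_left
            (Real.rpow_le_rpow_of_nonpos (by positivity) hxr (by linarith)) (by positivity)
  rw [mul_assoc]
  rcases le_total 1 ‖x‖ with hx | hx
  · have hx₀ : 0 < ‖x‖ := one_pos.trans_le hx
    have hexp : ‖x‖ ^ (-2 - α) ≤ (‖x‖ ^ 2) ^ (p - 1) := by
      rw [← Real.rpow_natCast, ← Real.rpow_mul hx₀.le]
      exact Real.rpow_le_rpow_of_exponent_le hx (by push_cast; linarith)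
    calc v x ≤ A * ‖x‖ ^ (-2 - α) := hvA x (norm_pos_iff.1 hx₀)
      _ ≤ (A + C) * (2 ^ (1 - p) * (1 + ‖x‖ ^ 2) ^ (p - 1)) := by
          gcongr
          · linarith
          · exact hexp.trans (hcomp (by positivity) (by nlinarith))
  · calc v x ≤ C * 1 ^ (p - 1) := by simpa using hvC x
      _ ≤ (A + C) * (2 ^ (1 - p) * (1 + ‖x‖ ^ 2) ^ (p - 1)) := by
          gcongr
          · linarith
          · exact hcomp one_pos (by nlinarith [norm_nonneg x])

variable [InnerProductSpace ℝ E]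

theorem hasFDerivAt_one_add_norm_sq_rpow (p : ℝ) (x : E) :
    HasFDerivAt (fun y : E ↦ (1 + ‖y‖ ^ 2) ^ p)
      ((p * (1 + ‖x‖ ^ 2) ^ (p - 1)) • (2 : ℝ) • innerSL ℝ x) x :=
  ((hasFDerivAt_norm_sq x).const_add 1).rpow_const (.inl (by positivity))

theorem contDiff_one_add_norm_sq_rpow (p : ℝ) {n : ℕ∞} :
    ContDiff ℝ n fun y : E ↦ (1 + ‖y‖ ^ 2) ^ p :=
  (contDiff_const.add (contDiff_norm_sq ℝ)).rpow_const_of_ne fun x ↦ by positivity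

theorem lipschitzWith_one_add_norm_sq_rpow {p : ℝ} (hp : p ≤ 0) :
    LipschitzWith (2 * ‖p‖₊) fun x : E ↦ (1 + ‖x‖ ^ 2) ^ p := by
  refine lipschitzWith_of_nnnorm_fderiv_le (𝕜 := ℝ)
    (fun x ↦ (hasFDerivAt_one_add_norm_sq_rpow p x).differentiableAt) fun x ↦ ?_
  have hx : (1 + ‖x‖ ^ 2) ^ (p - 1) * ‖x‖ ≤ 1 := calc
    (1 + ‖x‖ ^ 2) ^ (p - 1) * ‖x‖ ≤ (1 + ‖x‖ ^ 2) ^ (p - 1) * (1 + ‖x‖ ^ 2) := by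
      gcongr
      nlinarith [sq_nonneg (‖x‖ - 1)]
    _ = (1 + ‖x‖ ^ 2) ^ p := by rw [← Real.rpow_add_one (by positivity), sub_add_cancel]
    _ ≤ 1 := one_add_norm_sq_rpow_le_one hp x
  rw [(hasFDerivAt_one_add_norm_sq_rpow p x).fderiv, ← NNReal.coe_le_coe, coe_nnnorm, norm_smul,
    norm_smul, innerSL_apply_norm, norm_mul, Real.norm_of_nonneg (r := (1 + _) ^ _) (by positivity)]
  calc ‖p‖ * (1 + ‖x‖ ^ 2) ^ (p - 1) * (‖(2 : ℝ)‖ * ‖x‖)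
      = 2 * ‖p‖ * ((1 + ‖x‖ ^ 2) ^ (p - 1) * ‖x‖) := by rw [Real.norm_two]; ring
    _ ≤ 2 * ‖p‖ := mul_le_of_le_one_right (by positivity) hx

variable [FiniteDimensional ℝ E]

theorem tendsto_one_add_norm_sq_rpow_cocompact {p : ℝ} (hp : p < 0) :
    Tendsto (fun x : E ↦ (1 + ‖x‖ ^ 2) ^ p) (cocompact E) (𝓝 0) := by
  simpa only [neg_neg, Function.comp_def] using
    (tendsto_rpow_neg_atTop (neg_pos.2 hp)).comp (tendsto_one_add_norm_sq_cocompact (E := E))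

theorem laplacian_one_add_norm_sq_rpow (p : ℝ) (x : E) :
    Δ (fun y : E ↦ ((1 + ‖y‖ ^ 2) ^ p : ℝ)) x
      = 4 * ‖x‖ ^ 2 * (p * ((p - 1) * (1 + ‖x‖ ^ 2) ^ (p - 2)))
        + 2 * finrank ℝ E * (p * (1 + ‖x‖ ^ 2) ^ (p - 1)) := by
  have hderiv (q : ℝ) {t : ℝ} (ht : 0 ≤ t) :
      HasDerivAt (fun t ↦ (1 + t) ^ q) (q * (1 + t) ^ (q - 1)) t := by
    have hne : 1 + id t ≠ 0 := (add_pos_of_pos_of_nonneg one_pos ht).ne'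
    simpa only [id_eq, one_mul] using ((hasDerivAt_id t).const_add 1).rpow_const (p := q) (.inl hne)
  have h := laplacian_comp_norm_sq (φ := fun t ↦ (1 + t) ^ p) (fun t ht ↦ hderiv p ht)
    ((hderiv (p - 1) (sq_nonneg ‖x‖)).const_mul p)
  rwa [sub_sub, one_add_one_eq_two] at h

theorem mul_one_add_norm_sq_rpow_le_neg_laplacian {p : ℝ} (hp : p ≤ 0) (x : E) :
    -(2 * p * (finrank ℝ E - 2 + 2 * p)) * (1 + ‖x‖ ^ 2) ^ (p - 1)
      ≤ -Δ (fun y : E ↦ ((1 + ‖y‖ ^ 2) ^ p : ℝ)) x := by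
  have hpow : (1 + ‖x‖ ^ 2) ^ (p - 1) = (1 + ‖x‖ ^ 2) ^ (p - 2) * (1 + ‖x‖ ^ 2) := by
    rw [← Real.rpow_add_one (by positivity)]
    congr 1
    ring
  have hrem : 0 ≤ 4 * (p * (p - 1)) * (1 + ‖x‖ ^ 2) ^ (p - 2) :=
    mul_nonneg (mul_nonneg zero_le_four (mul_nonneg_of_nonpos_of_nonpos hp (by linarith)))
      (by positivity)
  rw [laplacian_one_add_norm_sq_rpow, hpow]
  linarith

theorem exists_pos_le_neg_laplacian {v : E → ℝ} {A C α : ℝ} (hE : 2 < finrank ℝ E) (hA : 0 < A)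
    (hα : 0 < α) (hvC : ∀ x, v x ≤ C) (hvA : ∀ x ≠ 0, v x ≤ A * ‖x‖ ^ (-2 - α)) :
    ∃ W : E → ℝ, ContDiff ℝ 2 W ∧ (∀ x, 0 < W x) ∧ (∃ L : ℝ≥0, LipschitzWith L W) ∧
      Tendsto W (cocompact E) (𝓝 0) ∧ ∀ x, v x ≤ -Δ W x := by
  have hE' : (2 : ℝ) < finrank ℝ E := mod_cast hE
  obtain ⟨p, hp, hpα, hpE⟩ : ∃ p < 0, -α ≤ 2 * p ∧ 0 < finrank ℝ E - 2 + 2 * p :=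
    ⟨-min α ((finrank ℝ E - 2) / 2) / 2, by
      have := lt_min hα (half_pos (sub_pos.2 hE'))
      linarith, by linarith [min_le_left α ((finrank ℝ E - 2) / 2)], by
      linarith [min_le_right α ((finrank ℝ E - 2) / 2)]⟩
  have hc : 0 < -(2 * p * (finrank ℝ E - 2 + 2 * p)) := by nlinarith
  set c := -(2 * p * (finrank ℝ E - 2 + 2 * p))
  have hC₀ : 0 ≤ max C 0 := le_max_right C 0
  set K := (A + max C 0) * 2 ^ (1 - p) / c
  have : 0 < K := by positivity
  have hsmooth : ContDiff ℝ 2 fun y : E ↦ (1 + ‖y‖ ^ 2) ^ p := contDiff_one_add_norm_sq_rpow p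
  refine ⟨fun x ↦ K * (1 + ‖x‖ ^ 2) ^ p, contDiff_const.mul hsmooth, fun x ↦ by positivity,
    ⟨_, (lipschitzWith_smul K).comp (lipschitzWith_one_add_norm_sq_rpow hp.le)⟩,
    by simpa using (tendsto_one_add_norm_sq_rpow_cocompact hp).const_mul K, fun x ↦ ?_⟩
  have hΔ : Δ (fun y : E ↦ (K * (1 + ‖y‖ ^ 2) ^ p : ℝ)) x
      = K * Δ (fun y : E ↦ ((1 + ‖y‖ ^ 2) ^ p : ℝ)) x :=
    laplacian_smul K hsmooth.contDiffAt
  calc v x ≤ (A + max C 0) * 2 ^ (1 - p) * (1 + ‖x‖ ^ 2) ^ (p - 1) :=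
        le_mul_one_add_norm_sq_rpow hA.le hC₀ (fun y ↦ (hvC y).trans (le_max_left C 0)) hvA
          (by linarith) hpα x
    _ = K * (c * (1 + ‖x‖ ^ 2) ^ (p - 1)) := by rw [← mul_assoc, div_mul_cancel₀ _ hc.ne']
    _ ≤ -Δ (fun y : E ↦ (K * (1 + ‖y‖ ^ 2) ^ p : ℝ)) x := by
        rw [hΔ, ← mul_neg]
        gcongr
        exact mul_one_add_norm_sq_rpow_le_neg_laplacian hp.le x

end Supersolution

section PrincipalEigenvalue

theorem exists_integral_mul_sq_eq_one {E : Type*} [NormedAddCommGroup E] [InnerProductSpace ℝ E]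
    [FiniteDimensional ℝ E] [MeasurableSpace E] [BorelSpace E] {V : E → ℝ} (hV : Continuous V)
    {x₀ : E} (hx₀ : 0 < V x₀) :
    ∃ u : E → ℝ, ContDiff ℝ (⊤ : ℕ∞) u ∧ HasCompactSupport u ∧ ∫ x, V x * u x ^ 2 = 1 := by
  obtain ⟨r, hr, hball⟩ := Metric.isOpen_iff.1 (isOpen_lt continuous_const hV) x₀ hx₀
  let b : ContDiffBump x₀ := ⟨r / 2, r, half_pos hr, half_lt_self hr⟩
  have hbx₀ : b x₀ = 1 := b.one_of_mem_closedBall (mem_closedBall_self b.rIn_pos.le)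
  have hpos : 0 < ∫ x, V x * b x ^ 2 := by
    refine (hV.mul (b.continuous.pow 2)).integral_pos_of_hasCompactSupport_nonneg_nonzero (x := x₀)
      (b.hasCompactSupport.comp_left (g := (· ^ 2)) (zero_pow two_ne_zero)).mul_left (fun x ↦ ?_)
      (by simpa [hbx₀] using hx₀.ne')
    by_cases hx : x ∈ ball x₀ r
    · have : 0 < V x := hball hx
      exact mul_nonneg this.le (sq_nonneg _)
    · simp [b.zero_of_le_dist (not_lt.1 hx)]
  set c := ∫ x, V x * b x ^ 2
  refine ⟨fun x ↦ (√c)⁻¹ * b x, contDiff_const.mul b.contDiff, b.hasCompactSupport.mul_left, ?_⟩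
  calc ∫ x, V x * ((√c)⁻¹ * b x) ^ 2 = ∫ x, c⁻¹ * (V x * b x ^ 2) := by
        simp only [mul_pow, inv_pow, Real.sq_sqrt hpos.le, mul_left_comm]
    _ = 1 := by rw [integral_const_mul, inv_mul_cancel₀ hpos.ne']

theorem exists_tendsto_sInf_atTop {s : ℝ → Set ℝ} (hs : Monotone s) {a R₀ : ℝ}
    (ha : ∀ R, a ∈ lowerBounds (s R)) (hne : (s R₀).Nonempty) :
    ∃ l, Tendsto (fun R ↦ sInf (s R)) atTop (𝓝 l) := by
  have hne' (R : ℝ) : (s (max R R₀)).Nonempty := hne.mono (hs (le_max_right R R₀))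
  have hanti : Antitone fun R ↦ sInf (s (max R R₀)) := fun R R' h ↦
    csInf_le_csInf ⟨a, ha _⟩ (hne' R) (hs (max_le_max_right R₀ h))
  have hbdd : BddBelow (range fun R ↦ sInf (s (max R R₀))) :=
    ⟨a, forall_mem_range.2 fun R ↦ le_csInf (hne' R) (ha _)⟩
  refine ⟨_, (tendsto_atTop_ciInf hanti hbdd).congr' ?_⟩
  filter_upwards [eventually_ge_atTop R₀] with R hR using by rw [max_eq_left hR]

/-- The Dirichlet energies over which the infimum `lam1 N V R` is taken. -/
def dirichletEnergies {N : ℕ} (V : Euc N → ℝ) (R : ℝ) : Set ℝ :=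
  { t : ℝ | ∃ u : Euc N → ℝ, ContDiff ℝ (⊤ : ℕ∞) u ∧ HasCompactSupport u ∧
    tsupport u ⊆ ball (0 : Euc N) R ∧
    (∫ x, V x * u x ^ 2) = 1 ∧ t = ∫ x, ‖gradient u x‖ ^ 2 }

variable {N : ℕ} {V : Euc N → ℝ}

theorem dirichletEnergies_mono : Monotone (dirichletEnergies V) := by
  rintro R R' h t ⟨u, hu, huc, huR, hVu, ht⟩
  exact ⟨u, hu, huc, huR.trans (ball_subset_ball h), hVu, ht⟩

theorem zero_mem_lowerBounds_dirichletEnergies (R : ℝ) :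
    0 ∈ lowerBounds (dirichletEnergies V R) := by
  rintro _ ⟨u, -, -, -, -, rfl⟩
  exact integral_nonneg fun x ↦ sq_nonneg _

theorem exists_nonempty_dirichletEnergies (hV : Continuous V) {x₀ : Euc N} (hx₀ : 0 < V x₀) :
    ∃ R, (dirichletEnergies V R).Nonempty := by
  obtain ⟨u, hu, huc, hVu⟩ := exists_integral_mul_sq_eq_one hV hx₀
  obtain ⟨R, hR⟩ := huc.isCompact.isBounded.subset_ball (0 : Euc N)
  exact ⟨R, _, u, hu, huc, hR, hVu, rfl⟩

theorem exists_integral_norm_gradient_sq_lt (hV : Continuous V) {x₀ : Euc N} (hx₀ : 0 < V x₀)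
    {lam : ℝ} (hlam : Lam N V < lam) :
    ∃ φ : Euc N → ℝ, ContDiff ℝ 1 φ ∧ HasCompactSupport φ ∧ ∫ x, V x * φ x ^ 2 = 1 ∧
      ∫ x, ‖gradient φ x‖ ^ 2 < lam := by
  obtain ⟨R₀, hR₀⟩ := exists_nonempty_dirichletEnergies hV hx₀
  have hlim : Tendsto (lam1 N V) atTop (𝓝 (Lam N V)) :=
    tendsto_nhds_limUnder (exists_tendsto_sInf_atTop dirichletEnergies_mono
      zero_mem_lowerBounds_dirichletEnergies hR₀)
  obtain ⟨R, hR, hRR₀⟩ := ((hlim.eventually_lt_const hlam).and (eventually_ge_atTop R₀)).exists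
  obtain ⟨_, ⟨φ, hφ, hφc, -, hVφ, rfl⟩, hlt⟩ :=
    exists_lt_of_csInf_lt (hR₀.mono (dirichletEnergies_mono hRR₀)) hR
  exact ⟨φ, contDiff_infty.1 hφ 1, hφc, hVφ, hlt⟩

end PrincipalEigenvalue

section MonotoneIteration

open InnerProductSpace Laplacian

theorem holderWith_of_lipschitzWith_of_mem_Icc {X : Type*} [PseudoEMetricSpace X] {u : X → ℝ}
    {L β : ℝ≥0} {M : ℝ} (hu : LipschitzWith L u) (huM : ∀ x, u x ∈ Icc 0 M) (hβ : β ≤ 1) :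
    HolderWith (max M.toNNReal L) β u := by
  refine HolderWith.of_le_of_le (r := 0) (fun x y ↦ ?_) (holderWith_one.2 hu) zero_le hβ
  rw [NNReal.coe_zero, ENNReal.rpow_zero, mul_one, edist_dist]
  exact ENNReal.ofReal_le_ofReal (by simpa using Real.dist_le_of_mem_Icc (huM x) (huM y))

/-- A source term `G` of the semilinear equation `k u - Δ u = G (x, u)` for which the monotone
iteration runs between the ordered solution `0` and supersolution `M`. -/
structure IsMonotoneSource {E : Type*} [NormedAddCommGroup E] (G : E → ℝ → ℝ) (k M : ℝ)
    (β C L : ℝ≥0) : Prop where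
  k_pos : 0 < k
  M_pos : 0 < M
  β_pos : 0 < β
  β_le_one : β ≤ 1
  holderWith : ∀ a ∈ Icc 0 M, HolderWith C β (G · a)
  lipschitzOnWith : ∀ x, LipschitzOnWith L (G x) (Icc 0 M)
  strictMonoOn : ∀ x, StrictMonoOn (G x) (Icc 0 M)
  apply_zero : ∀ x, G x 0 = 0
  apply_le : ∀ x, G x M ≤ k * M

/-- The Lipschitz functions with values in `[0, M]`, the space on which the iteration acts. -/
def lipschitzOrderInterval (E : Type*) [NormedAddCommGroup E] (M : ℝ) : Set (E → ℝ) :=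
  {u | (∃ L : ℝ≥0, LipschitzWith L u) ∧ ∀ x, u x ∈ Icc 0 M}

/-- One step of the monotone iteration: the solution `v` of `k v - Δ v = G (x, u)`. -/
def resolventStep {E : Type*} [NormedAddCommGroup E] [InnerProductSpace ℝ E]
    [FiniteDimensional ℝ E] [MeasurableSpace E] [BorelSpace E] (G : E → ℝ → ℝ) (k : ℝ)
    (u : E → ℝ) : E → ℝ :=
  heatResolvent k fun x ↦ G x (u x)

namespace IsMonotoneSource

variable {E : Type*} [NormedAddCommGroup E] {G : E → ℝ → ℝ} {k M : ℝ} {β C L : ℝ≥0}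
  {u v w W : E → ℝ}

theorem exists_holderWith (S : IsMonotoneSource G k M β C L)
    (hu : u ∈ lipschitzOrderInterval E M) : ∃ C', HolderWith C' β fun x ↦ G x (u x) := by
  obtain ⟨⟨L', hL'⟩, huM⟩ := hu
  have hhol := holderWith_of_lipschitzWith_of_mem_Icc hL' huM S.β_le_one
  refine ⟨C + L * max M.toNNReal L', fun x y ↦ ?_⟩
  calc edist (G x (u x)) (G y (u y))
      ≤ edist (G x (u x)) (G y (u x)) + edist (G y (u x)) (G y (u y)) := edist_triangle _ _ _
    _ ≤ C * edist x y ^ (β : ℝ) + L * (max M.toNNReal L' * edist x y ^ (β : ℝ)) :=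
        add_le_add (S.holderWith _ (huM x) x y)
          ((S.lipschitzOnWith y (huM x) (huM y)).trans (mul_le_mul_right (hhol x y) _))
    _ = (C + L * max M.toNNReal L' : ℝ≥0) * edist x y ^ (β : ℝ) := by
        push_cast
        ring

theorem continuous_comp (S : IsMonotoneSource G k M β C L)
    (hu : u ∈ lipschitzOrderInterval E M) : Continuous fun x ↦ G x (u x) :=
  (S.exists_holderWith hu).choose_spec.continuous S.β_pos

theorem apply_mem_Icc (S : IsMonotoneSource G k M β C L) (x : E) {a : ℝ} (ha : a ∈ Icc 0 M) :
    G x a ∈ Icc 0 (k * M) := by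
  have hmono := (S.strictMonoOn x).monotoneOn
  exact ⟨(S.apply_zero x).ge.trans (hmono (left_mem_Icc.2 S.M_pos.le) ha ha.1),
    (hmono ha (right_mem_Icc.2 S.M_pos.le) ha.2).trans (S.apply_le x)⟩

theorem norm_apply_le (S : IsMonotoneSource G k M β C L) (x : E) {a : ℝ} (ha : a ∈ Icc 0 M) :
    ‖G x a‖ ≤ k * M := by
  rw [Real.norm_of_nonneg (S.apply_mem_Icc x ha).1]
  exact (S.apply_mem_Icc x ha).2

theorem tendsto_apply (S : IsMonotoneSource G k M β C L) (x : E) {a : ℕ → ℝ} {b : ℝ}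
    (ha : ∀ n, a n ∈ Icc 0 M) (hab : Tendsto a atTop (𝓝 b)) :
    Tendsto (fun n ↦ G x (a n)) atTop (𝓝 (G x b)) :=
  ((S.lipschitzOnWith x).continuousOn b
    (isClosed_Icc.mem_of_tendsto hab (.of_forall ha))).tendsto.comp
    (tendsto_nhdsWithin_iff.2 ⟨hab, .of_forall ha⟩)

theorem min_mem (S : IsMonotoneSource G k M β C L) (hW₀ : ∀ x, 0 ≤ W x) {L' : ℝ≥0}
    (hW : LipschitzWith L' W) : (fun x ↦ min M (W x)) ∈ lipschitzOrderInterval E M :=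
  ⟨⟨_, (LipschitzWith.const M).min hW⟩,
    fun x ↦ ⟨le_min S.M_pos.le (hW₀ x), min_le_left M (W x)⟩⟩

theorem norm_div_sub_le (S : IsMonotoneSource G k M β C L) (x : E) {a : ℝ} (ha : a ∈ Icc 0 M) :
    ‖G x a / a - k‖ ≤ L + k := by
  have hlip : ‖G x a‖ ≤ L * ‖a‖ := by
    simpa [S.apply_zero] using
      (S.lipschitzOnWith x).norm_sub_le ha (left_mem_Icc.2 S.M_pos.le)
  calc ‖G x a / a - k‖ ≤ ‖G x a / a‖ + ‖k‖ := norm_sub_le _ _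
    _ ≤ L + k := by
        rw [norm_div, Real.norm_of_nonneg S.k_pos.le]
        gcongr
        exact div_le_of_le_mul₀ (norm_nonneg a) L.2 hlip

variable [InnerProductSpace ℝ E] [FiniteDimensional ℝ E] [MeasurableSpace E] [BorelSpace E]

theorem contDiff_resolventStep (S : IsMonotoneSource G k M β C L)
    (hu : u ∈ lipschitzOrderInterval E M) : ContDiff ℝ 2 (resolventStep G k u) :=
  contDiff_two_heatResolvent S.k_pos S.β_pos (fun x ↦ S.norm_apply_le x (hu.2 x))
    (S.exists_holderWith hu).choose_spec

theorem laplacian_resolventStep (S : IsMonotoneSource G k M β C L)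
    (hu : u ∈ lipschitzOrderInterval E M) (x : E) :
    Δ (resolventStep G k u) x = k * resolventStep G k u x - G x (u x) :=
  laplacian_heatResolvent S.k_pos S.β_pos (fun x ↦ S.norm_apply_le x (hu.2 x))
    (S.exists_holderWith hu).choose_spec x

theorem resolventStep_mem_Icc (S : IsMonotoneSource G k M β C L) (hu : ∀ x, u x ∈ Icc 0 M)
    (hGu : Measurable fun x ↦ G x (u x)) (x : E) : resolventStep G k u x ∈ Icc 0 M := by
  have hbound (x : E) := S.norm_apply_le x (hu x)
  have hconst {c : ℝ} (_ : E) : ‖c‖ ≤ ‖c‖ := le_rfl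
  constructor
  · calc 0 = heatResolvent k (fun _ : E ↦ 0) x := by rw [heatResolvent_const S.k_pos, zero_div]
      _ ≤ resolventStep G k u x := heatResolvent_mono S.k_pos measurable_const hGu hconst hbound
          (fun y ↦ (S.apply_mem_Icc y (hu y)).1) x
  · calc resolventStep G k u x ≤ heatResolvent k (fun _ : E ↦ k * M) x :=
          heatResolvent_mono S.k_pos hGu measurable_const hbound hconst
            (fun y ↦ (S.apply_mem_Icc y (hu y)).2) x
      _ = M := by rw [heatResolvent_const S.k_pos, mul_div_cancel_left₀ _ S.k_pos.ne']

theorem resolventStep_mem (S : IsMonotoneSource G k M β C L) (hu : ∀ x, u x ∈ Icc 0 M)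
    (hGu : Measurable fun x ↦ G x (u x)) : resolventStep G k u ∈ lipschitzOrderInterval E M :=
  ⟨exists_lipschitzWith_heatResolvent S.k_pos hGu fun x ↦ S.norm_apply_le x (hu x),
    S.resolventStep_mem_Icc hu hGu⟩

theorem mapsTo_resolventStep (S : IsMonotoneSource G k M β C L) :
    MapsTo (resolventStep G k) (lipschitzOrderInterval E M) (lipschitzOrderInterval E M) :=
  fun _ hu ↦ S.resolventStep_mem hu.2 (S.continuous_comp hu).measurable

theorem monotoneOn_resolventStep (S : IsMonotoneSource G k M β C L) :
    MonotoneOn (resolventStep G k) (lipschitzOrderInterval E M) := fun _ hu _ hv huv ↦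
  heatResolvent_mono S.k_pos (S.continuous_comp hu).measurable (S.continuous_comp hv).measurable
    (fun x ↦ S.norm_apply_le x (hu.2 x)) (fun x ↦ S.norm_apply_le x (hv.2 x))
    fun x ↦ (S.strictMonoOn x).monotoneOn (hu.2 x) (hv.2 x) (huv x)

theorem resolventStep_pos (S : IsMonotoneSource G k M β C L)
    (hu : u ∈ lipschitzOrderInterval E M) {y : E} (hy : 0 < u y) (x : E) :
    0 < resolventStep G k u x :=
  heatResolvent_pos S.k_pos (S.continuous_comp hu) (fun x ↦ S.norm_apply_le x (hu.2 x))
    (fun x ↦ (S.apply_mem_Icc x (hu.2 x)).1)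
    ((S.apply_zero y).symm.trans_lt
      (S.strictMonoOn y (left_mem_Icc.2 S.M_pos.le) (hu.2 y) hy)) x

theorem resolventStep_le_of_supersolution (S : IsMonotoneSource G k M β C L)
    (hu : u ∈ lipschitzOrderInterval E M) (hW : ContDiff ℝ 2 W) (hW₀ : ∀ x, 0 ≤ W x)
    (h : ∀ x, G x (u x) ≤ k * W x - Δ W x) : resolventStep G k u ≤ W := by
  have hv := S.contDiff_resolventStep hu
  intro x
  refine sub_nonpos.1 (nonpos_of_mul_le_laplacian (z := resolventStep G k u - W) S.k_pos
    (hv.sub hW) (B := M) (fun y ↦ ?_) (fun y ↦ ?_) x)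
  · exact (sub_le_self _ (hW₀ y)).trans ((S.mapsTo_resolventStep hu).2 y).2
  · rw [hv.contDiffAt.laplacian_sub hW.contDiffAt, S.laplacian_resolventStep hu, Pi.sub_apply]
    linarith [h y]

theorem iterate_mem (S : IsMonotoneSource G k M β C L) (hw : w ∈ lipschitzOrderInterval E M)
    (n : ℕ) : (resolventStep G k)^[n] w ∈ lipschitzOrderInterval E M :=
  S.mapsTo_resolventStep.iterate n hw

theorem iterate_pos (S : IsMonotoneSource G k M β C L) (hw : w ∈ lipschitzOrderInterval E M)
    (hw₀ : ∀ x, 0 < w x) (n : ℕ) (x : E) : 0 < (resolventStep G k)^[n] w x := by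
  induction n generalizing x with
  | zero => exact hw₀ x
  | succ n ih =>
    rw [Function.iterate_succ_apply']
    exact S.resolventStep_pos (S.iterate_mem hw n) (ih x) x

theorem antitone_iterate (S : IsMonotoneSource G k M β C L)
    (hw : w ∈ lipschitzOrderInterval E M) (hwle : resolventStep G k w ≤ w) :
    Antitone fun n ↦ (resolventStep G k)^[n] w := by
  refine antitone_nat_of_succ_le fun n ↦ ?_
  induction n with
  | zero => exact hwle
  | succ n ih =>
    simpa only [← Function.iterate_succ_apply'] using
      S.monotoneOn_resolventStep (S.iterate_mem hw _) (S.iterate_mem hw _) ih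

theorem exists_tendsto_iterate (S : IsMonotoneSource G k M β C L)
    (hw : w ∈ lipschitzOrderInterval E M) (hwle : resolventStep G k w ≤ w) :
    ∃ u ∈ lipschitzOrderInterval E M, resolventStep G k u = u ∧ u ≤ w ∧
      ∀ x, Tendsto (fun n ↦ (resolventStep G k)^[n] w x) atTop (𝓝 (u x)) := by
  have hmem := S.iterate_mem hw
  have hanti := S.antitone_iterate hw hwle
  have hlim (x : E) : Tendsto (fun n ↦ (resolventStep G k)^[n] w x) atTop
      (𝓝 (⨅ n, (resolventStep G k)^[n] w x)) :=
    tendsto_atTop_ciInf (fun _ _ h ↦ hanti h x)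
      ⟨0, forall_mem_range.2 fun n ↦ ((hmem n).2 x).1⟩
  set u : E → ℝ := fun x ↦ ⨅ n, (resolventStep G k)^[n] w x
  have huM (x : E) : u x ∈ Icc 0 M :=
    isClosed_Icc.mem_of_tendsto (hlim x) (.of_forall fun n ↦ (hmem n).2 x)
  have hGlim (x : E) := S.tendsto_apply x (fun n ↦ (hmem n).2 x) (hlim x)
  have hGmeas (n : ℕ) := (S.continuous_comp (hmem n)).measurable
  have hfix : resolventStep G k u = u := by
    refine funext fun x ↦ tendsto_nhds_unique ?_ ((tendsto_add_atTop_iff_nat 1).2 (hlim x))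
    simp only [Function.iterate_succ_apply']
    exact tendsto_heatResolvent S.k_pos hGmeas (fun n y ↦ S.norm_apply_le y ((hmem n).2 y)) hGlim x
  refine ⟨u, hfix ▸ S.resolventStep_mem huM
    (measurable_of_tendsto_metrizable hGmeas (tendsto_pi_nhds.2 hGlim)), hfix, fun x ↦ ?_, hlim⟩
  exact le_of_tendsto' (hlim x) fun n ↦ hanti n.zero_le x

theorem integral_div_sub_mul_sq_le (S : IsMonotoneSource G k M β C L)
    (hu : u ∈ lipschitzOrderInterval E M) (hu₀ : ∀ x, 0 < u x) (hule : resolventStep G k u ≤ u)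
    {φ : E → ℝ} (hφ : ContDiff ℝ 1 φ) (hφc : HasCompactSupport φ) :
    ∫ x, (G x (u x) / u x - k) * φ x ^ 2 ≤ ∫ x, ‖gradient φ x‖ ^ 2 := by
  have hcont : Continuous fun x ↦ G x (u x) / u x - k :=
    ((S.continuous_comp hu).div hu.1.choose_spec.continuous fun x ↦ (hu₀ x).ne').sub
      continuous_const
  refine integral_mul_sq_le_integral_norm_gradient_sq hφ hφc (S.contDiff_resolventStep hu)
    (S.resolventStep_pos hu (hu₀ 0)) hcont fun x ↦ ?_
  calc (G x (u x) / u x - k) * resolventStep G k u x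
      = G x (u x) / u x * resolventStep G k u x - k * resolventStep G k u x := sub_mul _ _ _
    _ ≤ G x (u x) / u x * u x - k * resolventStep G k u x := by
        gcongr
        · exact div_nonneg (S.apply_mem_Icc x (hu.2 x)).1 (hu₀ x).le
        · exact hule x
    _ = -Δ (resolventStep G k u) x := by
        rw [div_mul_cancel₀ _ (hu₀ x).ne', S.laplacian_resolventStep hu, neg_sub]

theorem integral_mul_sq_le_of_tendsto_iterate_zero (S : IsMonotoneSource G k M β C L)
    (hw : w ∈ lipschitzOrderInterval E M) (hw₀ : ∀ x, 0 < w x) (hwle : resolventStep G k w ≤ w)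
    (hlim : ∀ x, Tendsto (fun n ↦ (resolventStep G k)^[n] w x) atTop (𝓝 0)) {q : E → ℝ}
    (hq : ∀ x, Tendsto (fun a ↦ G x a / a) (𝓝[>] 0) (𝓝 (k + q x))) {φ : E → ℝ}
    (hφ : ContDiff ℝ 1 φ) (hφc : HasCompactSupport φ) :
    ∫ x, q x * φ x ^ 2 ≤ ∫ x, ‖gradient φ x‖ ^ 2 := by
  have hmem := S.iterate_mem hw
  have hpos := S.iterate_pos hw hw₀
  set U : ℕ → E → ℝ := fun n ↦ (resolventStep G k)^[n] w
  have hφ₂ : Continuous fun x ↦ φ x ^ 2 := hφ.continuous.pow 2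
  have hφ₂c : HasCompactSupport fun x ↦ φ x ^ 2 :=
    hφc.comp_left (g := (· ^ 2)) (zero_pow two_ne_zero)
  have hcont (n : ℕ) : Continuous fun x ↦ (G x (U n x) / U n x - k) * φ x ^ 2 :=
    (((S.continuous_comp (hmem n)).div (hmem n).1.choose_spec.continuous
      fun x ↦ (hpos n x).ne').sub continuous_const).mul hφ₂
  have hbound (n : ℕ) (x : E) :
      ‖(G x (U n x) / U n x - k) * φ x ^ 2‖ ≤ (L + k) * φ x ^ 2 := by
    rw [norm_mul, Real.norm_of_nonneg (sq_nonneg (φ x))]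
    gcongr
    exact S.norm_div_sub_le x ((hmem n).2 x)
  have hptwise (x : E) :
      Tendsto (fun n ↦ (G x (U n x) / U n x - k) * φ x ^ 2) atTop (𝓝 (q x * φ x ^ 2)) := by
    have hquot : Tendsto (fun n ↦ G x (U n x) / U n x) atTop (𝓝 (k + q x)) :=
      (hq x).comp (tendsto_nhdsWithin_iff.2 ⟨hlim x, .of_forall fun n ↦ hpos n x⟩)
    simpa only [add_sub_cancel_left] using (hquot.sub_const k).mul_const (φ x ^ 2)
  have hint : Tendsto (fun n ↦ ∫ x, (G x (U n x) / U n x - k) * φ x ^ 2) atTop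
      (𝓝 (∫ x, q x * φ x ^ 2)) :=
    tendsto_integral_of_dominated_convergence _ (fun n ↦ (hcont n).aestronglyMeasurable)
      ((hφ₂.integrable_of_hasCompactSupport hφ₂c).const_mul _)
      (fun n ↦ ae_of_all _ (hbound n)) (ae_of_all _ hptwise)
  refine le_of_tendsto' hint fun n ↦
    S.integral_div_sub_mul_sq_le (hmem n) (hpos n) ?_ hφ hφc
  simpa only [U, Function.iterate_succ_apply'] using S.antitone_iterate hw hwle n.le_succ

theorem exists_pos_fixedPoint (S : IsMonotoneSource G k M β C L)
    (hw : w ∈ lipschitzOrderInterval E M) (hw₀ : ∀ x, 0 < w x) (hwle : resolventStep G k w ≤ w)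
    {q : E → ℝ} (hq : ∀ x, Tendsto (fun a ↦ G x a / a) (𝓝[>] 0) (𝓝 (k + q x))) {φ : E → ℝ}
    (hφ : ContDiff ℝ 1 φ) (hφc : HasCompactSupport φ)
    (hφq : ∫ x, ‖gradient φ x‖ ^ 2 < ∫ x, q x * φ x ^ 2) :
    ∃ u ∈ lipschitzOrderInterval E M, resolventStep G k u = u ∧ u ≤ w ∧ ∀ x, 0 < u x := by
  obtain ⟨u, hu, hfix, huw, hlim⟩ := S.exists_tendsto_iterate hw hwle
  refine ⟨u, hu, hfix, huw, ?_⟩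
  obtain ⟨y, hy⟩ : ∃ y, 0 < u y := by
    by_contra! hle
    have hzero (x : E) : u x = 0 := (hle x).antisymm (hu.2 x).1
    exact hφq.not_ge (S.integral_mul_sq_le_of_tendsto_iterate_zero hw hw₀ hwle
      (fun x ↦ hzero x ▸ hlim x) hq hφ hφc)
  rw [← hfix]
  exact S.resolventStep_pos hu hy

theorem resolventStep_min_le (S : IsMonotoneSource G k M β C L) {L' : ℝ≥0}
    (hWL : LipschitzWith L' W) (hW : ContDiff ℝ 2 W) (hW₀ : ∀ x, 0 ≤ W x)
    (h : ∀ x, G x (min M (W x)) ≤ k * W x - Δ W x) :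
    resolventStep G k (fun x ↦ min M (W x)) ≤ fun x ↦ min M (W x) := fun x ↦
  have hmem := S.min_mem hW₀ hWL
  le_min ((S.mapsTo_resolventStep hmem).2 x).2
    (S.resolventStep_le_of_supersolution hmem hW hW₀ h x)

end IsMonotoneSource

end MonotoneIteration

section Logistic

open Module InnerProductSpace Laplacian

/-- The shifted logistic nonlinearity, with which `-Δ u = lam * (V * u - f u)` reads
`k u - Δ u = logisticSource V f lam k (x, u)`. -/
def logisticSource {E : Type*} (V : E → ℝ) (f : ℝ → ℝ) (lam k : ℝ) (x : E) (a : ℝ) : ℝ :=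
  k * a + lam * (V x * a - f a)

theorem tendsto_logisticSource_div {E : Type*} (V : E → ℝ) {f : ℝ → ℝ} (lam k : ℝ)
    (hf₀ : f 0 = 0) (hf' : HasDerivWithinAt f 0 (Ici 0) 0) (x : E) :
    Tendsto (fun a ↦ logisticSource V f lam k x a / a) (𝓝[>] 0) (𝓝 (k + lam * V x)) := by
  have hslope : Tendsto (fun a ↦ f a / a) (𝓝[>] 0) (𝓝 0) := by
    simpa [hasDerivWithinAt_iff_tendsto_slope, slope_fun_def_field, hf₀] using hf'
  have hlim := (((hslope.const_sub (V x)).const_mul lam).const_add k)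
  rw [sub_zero] at hlim
  refine hlim.congr' (eventually_mem_nhdsWithin.mono fun a (ha : 0 < a) ↦ ?_)
  simp only [logisticSource]
  field_simp

theorem lipschitzOnWith_mul_sub {f : ℝ → ℝ} {s : Set ℝ} {c : ℝ} {B Lf : ℝ≥0} (hc : |c| ≤ B)
    (hf : LipschitzOnWith Lf f s) :
    LipschitzOnWith (B + Lf) (fun a ↦ c * a - f a) s := by
  refine LipschitzOnWith.of_dist_le_mul fun a ha b hb ↦ ?_
  calc dist (c * a - f a) (c * b - f b) ≤ dist (c * a) (c * b) + dist (f a) (f b) :=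
        dist_sub_sub_le _ _ _ _
    _ ≤ B * dist a b + Lf * dist a b := by
        gcongr
        · rw [Real.dist_eq, ← mul_sub, abs_mul, ← Real.dist_eq]
          gcongr
        · exact hf.dist_le_mul a ha b hb
    _ = (B + Lf : ℝ≥0) * dist a b := by rw [← add_mul, NNReal.coe_add]

theorem strictMonoOn_mul_add_mul {h : ℝ → ℝ} {s : Set ℝ} {K : ℝ≥0} {k lam : ℝ}
    (hh : LipschitzOnWith K h s) (hlam : 0 ≤ lam) (hk : lam * K < k) :
    StrictMonoOn (fun a ↦ k * a + lam * h a) s := by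
  intro a ha b hb hab
  have hle : h a - h b ≤ K * (b - a) := by
    have := hh.dist_le_mul a ha b hb
    rw [Real.dist_eq, dist_comm, Real.dist_eq, abs_of_pos (sub_pos.2 hab)] at this
    exact (le_abs_self _).trans this
  have hlt : lam * K * (b - a) < k * (b - a) := mul_lt_mul_of_pos_right hk (sub_pos.2 hab)
  have hlam' := mul_le_mul_of_nonneg_left hle hlam
  change k * a + lam * h a < k * b + lam * h b
  linarith

theorem logisticSource_min_le {E : Type*} {V : E → ℝ} {f : ℝ → ℝ} {lam k M r d : ℝ} {x : E}
    (hlam : 0 ≤ lam) (hk : 0 ≤ k) (hM : 0 ≤ M) (hf : ∀ a, 0 ≤ a → 0 ≤ f a)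
    (hr : 0 ≤ r) (hd : lam * M * max (V x) 0 ≤ d) :
    logisticSource V f lam k x (min M r) ≤ k * r + d := by
  have hmin : 0 ≤ min M r := le_min hM hr
  refine add_le_add (mul_le_mul_of_nonneg_left (min_le_right M r) hk) (le_trans ?_ hd)
  calc lam * (V x * min M r - f (min M r)) ≤ lam * (max (V x) 0 * M) := by
        gcongr
        calc V x * min M r - f (min M r) ≤ V x * min M r := sub_le_self _ (hf _ hmin)
          _ ≤ max (V x) 0 * M := mul_le_mul (le_max_left _ _) (min_le_left _ _) hmin
              (le_max_right _ _)
    _ = lam * M * max (V x) 0 := by ring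

variable {E : Type*} [NormedAddCommGroup E] {V : E → ℝ} {f : ℝ → ℝ} {lam M : ℝ}
  {β B H Lf : ℝ≥0}

theorem holderWith_logisticSource (hV : HolderWith H β V) (k : ℝ) {a : ℝ} (ha : a ∈ Icc 0 M) :
    HolderWith (H * ‖lam * M‖₊) β (logisticSource V f lam k · a) := by
  have hadd := (hV.smul (lam * a)).add (HolderWith.const (C := 0) (y := k * a - lam * f a))
  have heq : logisticSource V f lam k (a := a)
      = (lam * a) • V + Function.const E (k * a - lam * f a) := by
    ext x
    simp only [logisticSource, Pi.add_apply, Pi.smul_apply, smul_eq_mul, Function.const_apply]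
    ring
  rw [heq]
  refine hadd.mono ?_
  rw [add_zero, nnnorm_mul, nnnorm_mul]
  gcongr _ * (_ * ?_)
  rw [← NNReal.coe_le_coe, coe_nnnorm, coe_nnnorm, Real.norm_of_nonneg ha.1]
  exact ha.2.trans (le_abs_self M)

theorem isMonotoneSource_logisticSource (hlam : 0 < lam) (hM : 0 < M) (hβ : 0 < β) (hβ₁ : β ≤ 1)
    (hV : HolderWith H β V) (hVB : ∀ x, |V x| ≤ B) (hf : LipschitzOnWith Lf f (Icc 0 M))
    (hf₀ : f 0 = 0) (hfM : ∀ x, V x * M ≤ f M) {k : ℝ} (hk : lam * (B + Lf : ℝ≥0) < k) :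
    IsMonotoneSource (logisticSource V f lam k) k M β (H * ‖lam * M‖₊)
      (‖k‖₊ + ‖lam‖₊ * (B + Lf)) where
  k_pos := (by positivity : 0 ≤ lam * (B + Lf : ℝ≥0)).trans_lt hk
  M_pos := hM
  β_pos := hβ
  β_le_one := hβ₁
  holderWith _ ha := holderWith_logisticSource hV k ha
  lipschitzOnWith x := ((lipschitzWith_smul k).lipschitzOnWith (s := Icc 0 M)).add
    ((lipschitzWith_smul lam).comp_lipschitzOnWith (lipschitzOnWith_mul_sub (hVB x) hf))
  strictMonoOn x := strictMonoOn_mul_add_mul (lipschitzOnWith_mul_sub (hVB x) hf) hlam.le hk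
  apply_zero x := by simp [logisticSource, hf₀]
  apply_le x := add_le_of_nonpos_right
    (mul_nonpos_of_nonneg_of_nonpos hlam.le (sub_nonpos.2 (hfM x)))

variable [InnerProductSpace ℝ E] [FiniteDimensional ℝ E] [MeasurableSpace E] [BorelSpace E]

theorem exists_pos_neg_laplacian_eq_logistic {A α : ℝ} (hE : 2 < finrank ℝ E) (hβ : 0 < β)
    (hβ₁ : β ≤ 1) (hV : HolderWith H β V) (hVB : ∀ x, |V x| ≤ B) (hA : 0 < A) (hα : 0 < α)
    (hVA : ∀ x ≠ 0, max (V x) 0 ≤ A * ‖x‖ ^ (-2 - α)) (hM : 0 < M)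
    (hf : LipschitzOnWith Lf f (Icc 0 M)) (hf_nonneg : ∀ a, 0 ≤ a → 0 ≤ f a) (hf₀ : f 0 = 0)
    (hf' : HasDerivWithinAt f 0 (Ici 0) 0) (hfM : ∀ x, V x * M ≤ f M) {φ : E → ℝ}
    (hφ : ContDiff ℝ 1 φ) (hφc : HasCompactSupport φ) (hVφ : ∫ x, V x * φ x ^ 2 = 1)
    (hlam : ∫ x, ‖gradient φ x‖ ^ 2 < lam) :
    ∃ u : E → ℝ, ContDiff ℝ 2 u ∧ (∀ x, 0 < u x) ∧
      (∀ x, -Δ u x = lam * (V x * u x - f (u x))) ∧ Tendsto u (cocompact E) (𝓝 0) := by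
  have hlam₀ : 0 < lam := (integral_nonneg fun x ↦ sq_nonneg _).trans_lt hlam
  have hlamM : 0 < lam * M := mul_pos hlam₀ hM
  obtain ⟨W, hW, hW₀, ⟨L, hWL⟩, hWlim, hWΔ⟩ :=
    exists_pos_le_neg_laplacian (v := fun x ↦ lam * M * max (V x) 0) hE (mul_pos hlamM hA) hα
      (C := lam * M * B)
      (fun x ↦ mul_le_mul_of_nonneg_left (max_le ((le_abs_self _).trans (hVB x)) B.2) hlamM.le)
      (fun x hx ↦ (mul_le_mul_of_nonneg_left (hVA x hx) hlamM.le).trans_eq (mul_assoc _ _ _).symm)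
  set k := lam * (B + Lf : ℝ≥0) + 1
  have S := isMonotoneSource_logisticSource hlam₀ hM hβ hβ₁ hV hVB hf hf₀ hfM (lt_add_one _)
  have hφq : ∫ x, ‖gradient φ x‖ ^ 2 < ∫ x, lam * V x * φ x ^ 2 := by
    simpa only [mul_assoc, integral_const_mul, hVφ, mul_one] using hlam
  obtain ⟨u, hu, hfix, huW, hu₀⟩ := S.exists_pos_fixedPoint
    (S.min_mem (fun x ↦ (hW₀ x).le) hWL) (fun x ↦ lt_min hM (hW₀ x))
    (S.resolventStep_min_le hWL hW (fun x ↦ (hW₀ x).le) fun x ↦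
      logisticSource_min_le hlam₀.le S.k_pos.le hM.le hf_nonneg (hW₀ x).le (hWΔ x))
    (tendsto_logisticSource_div V lam k hf₀ hf') hφ hφc hφq
  refine ⟨u, hfix ▸ S.contDiff_resolventStep hu, hu₀, fun x ↦ ?_,
    squeeze_zero (fun x ↦ (hu₀ x).le) (fun x ↦ (huW x).trans (min_le_right _ _)) hWlim⟩
  have heq := S.laplacian_resolventStep hu x
  rw [hfix, logisticSource] at heq
  linarith

end Logistic

theorem CondF.exists_pos_mul_le {N : ℕ} {V : Euc N → ℝ} {f : ℝ → ℝ} (hf : CondF N V f)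
    (hV : BddAbove (range fun x ↦ |V x|)) : ∃ M > 0, ∀ x, V x * M ≤ f M := by
  obtain ⟨-, -, -, -, -, -, L, hL, hVL⟩ := hf
  obtain ⟨M, hVM, hM⟩ := ((hL.eventually_const_lt hVL).and (eventually_gt_atTop 0)).exists
  have hsup : ⨆ x, |V x| < f M / M := mod_cast hVM
  refine ⟨M, hM, fun x ↦ (le_div_iff₀ hM).1 ?_⟩
  exact ((le_abs_self _).trans (le_ciSup hV x)).trans hsup.le

theorem CondF.hasDerivWithinAt_zero {N : ℕ} {V : Euc N → ℝ} {f : ℝ → ℝ} (hf : CondF N V f) :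
    HasDerivWithinAt f 0 (Ici 0) 0 := by
  obtain ⟨hf₁, -, -, hf', -⟩ := hf
  exact (hf' ▸ (hf₁.differentiable one_ne_zero 0).hasDerivAt).hasDerivWithinAt

theorem stmt1_general {N : ℕ} (hN : 3 ≤ N) {V : Euc N → ℝ}
    (hV : ∃ C β : ℝ≥0, 0 < β ∧ β ≤ 1 ∧ HolderWith C β V) (hVb : BddAbove (range fun x ↦ |V x|))
    (hV₀ : ∃ x, 0 < V x) (hdec : CondVDecay N V) {f : ℝ → ℝ} (hf : LocallyLipschitzOn (Ici 0) f)
    (hf_nonneg : ∀ a, 0 ≤ a → 0 ≤ f a) (hf₀ : f 0 = 0) (hf' : HasDerivWithinAt f 0 (Ici 0) 0)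
    (hfM : ∃ M > 0, ∀ x, V x * M ≤ f M) {lam : ℝ} (hlam : Lam N V < lam) :
    ∃ u : Euc N → ℝ, IsSolution N V f lam u := by
  obtain ⟨H, β, hβ, hβ₁, hH⟩ := hV
  obtain ⟨C, hVC⟩ := hVb
  obtain ⟨x₀, hx₀⟩ := hV₀
  obtain ⟨A, α, hA, hα, hVA⟩ := hdec
  obtain ⟨M, hM, hfM⟩ := hfM
  obtain ⟨Lf, hLf⟩ :=
    (hf.mono Icc_subset_Ici_self).exists_lipschitzOnWith_of_compact (isCompact_Icc (b := M))
  obtain ⟨φ, hφ, hφc, hVφ, hφlam⟩ := exists_integral_norm_gradient_sq_lt (hH.continuous hβ) hx₀ hlam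
  obtain ⟨u, hu, hu₀, heqn, hlim⟩ := exists_pos_neg_laplacian_eq_logistic (B := C.toNNReal)
    (by rwa [finrank_euclideanSpace_fin]) hβ hβ₁ hH (fun x ↦ (hVC ⟨x, rfl⟩).trans C.le_coe_toNNReal)
    hA hα hVA hM hLf hf_nonneg hf₀ hf' hfM hφ hφc hVφ hφlam
  exact ⟨u, hu, hu₀, by rwa [lap_eq_laplacian hu], hlim⟩

/-- for every `λ > Λ`, problem `(P_λ)` has at least one solution. -/
theorem stmt1 (N : ℕ) (hN : 3 ≤ N) (V V₁ V₂ : Euc N → ℝ)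
    (hV : CondV N V V₁ V₂) (hdec : CondVDecay N V)
    (f : ℝ → ℝ) (hf : CondF N V f)
    (lam : ℝ) (hlam : Lam N V < lam) :
    ∃ u : Euc N → ℝ, IsSolution N V f lam u :=
  have hVb : BddAbove (range fun x ↦ |V x|) := hV.2.1.imp fun _ ↦ forall_mem_range.2
  stmt1_general hN hV.1 hVb hV.2.2.1 hdec hf.1.locallyLipschitz.locallyLipschitzOn hf.2.1
    hf.2.2.1 hf.hasDerivWithinAt_zero (hf.exists_pos_mul_le hVb) hlam

end
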